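/- arXiv:1610.05294 — 3 statements merged into one kernel-verified Lean document; each statement's English description precedes it below -/
import Mathlib

section
/- Let M be a normal topological space with a regular finite Borel measure μ, and let N be a geodesically convex metric space. Then the set of continuous maps M → N is dense in L¹_μ(M,N), the space of measurable maps f : M → N with ∫ dist_N(f(x), 0̂) dμ(x) < ∞, equipped with the distance dist(f,g) = ∫ dist_N(f(x),g(x)) dμ(x). -/
open MeasureTheory Set

/-- Inner regularity with respect to closed sets, and concentration on a compact set. -/
def Rad {M : Type*} [TopologicalSpace M] [MeasurableSpace M] (μ : Measure M) : Prop :=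
  (∀ E : Set M, MeasurableSet E → ∀ ε : ENNReal, ε ≠ 0 → ∃ F, F ⊆ E ∧ IsClosed F ∧ μ (E \ F) < ε) ∧
  ∃ K : Set M, IsCompact K ∧ ∀ A, MeasurableSet A → Disjoint A K → μ A = 0

lemma Rad.restrict {M : Type*} [TopologicalSpace M] [MeasurableSpace M] {μ : Measure M}
    (h : Rad μ) (E : Set M) : Rad (μ.restrict E) := by
  obtain ⟨h1, K, hK, h2⟩ := h
  refine ⟨fun A hA ε hε => ?_, K, hK, fun A hA hAK => ?_⟩
  · obtain ⟨F, hF, hc, hlt⟩ := h1 A hA ε hε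
    exact ⟨F, hF, hc, (Measure.restrict_apply_le _ _).trans_lt hlt⟩
  · exact le_antisymm ((Measure.restrict_apply_le _ _).trans (h2 A hA hAK).le) bot_le

lemma Rad.exists_open {M : Type*} [TopologicalSpace M] [MeasurableSpace M] {μ : Measure M}
    (h : Rad μ) {E : Set M} (hE : MeasurableSet E) (h0 : μ E = 0) {ε : ENNReal} (hε : ε ≠ 0) :
    ∃ G, E ⊆ G ∧ IsOpen G ∧ μ G < ε := by
  obtain ⟨F, hF, hc, hlt⟩ := h.1 Eᶜ hE.compl ε hε
  refine ⟨Fᶜ, subset_compl_comm.1 hF, hc.isOpen_compl, ?_⟩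
  refine lt_of_le_of_lt ?_ hlt
  calc μ Fᶜ ≤ μ (E ∪ (Eᶜ \ F)) := measure_mono (by intro x hx; by_cases hxE : x ∈ E <;> simp_all)
    _ ≤ μ E + μ (Eᶜ \ F) := measure_union_le _ _
    _ = μ (Eᶜ \ F) := by simp [h0]

lemma caseA {M J : Type*} [TopologicalSpace M] [MeasurableSpace M] [BorelSpace M]
    (μ : Measure M) [IsFiniteMeasure μ] (hR : Rad μ) [LinearOrder J] (q : M → J)
    (hq : ∀ S, MeasurableSet (q ⁻¹' S)) (hIic : ∀ a : J, μ (q ⁻¹' (Iic a)) = 0)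
    (hcomp : ∀ (a : J) (W : Finset (Iio a) → Set J), (∀ t, μ (q ⁻¹' (W t)) = 0) →
      μ (q ⁻¹' (⋃ t, W t)) = 0)
    (hatom : ∀ S, μ (q ⁻¹' S) = 0 ∨ μ (q ⁻¹' Sᶜ) = 0) : μ = 0 := by
  by_contra hμ
  have hm : μ univ ≠ 0 := by simpa using hμ
  have hmt : μ univ ≠ ⊤ := measure_ne_top _ _
  have hm2 : μ univ / 2 ≠ 0 := by simp [hm]
  choose G hG hGo hGlt using fun a => hR.exists_open (hq (Iic a)) (hIic a) hm2
  have hqm : ∀ φ : J → ENNReal, Measurable fun y => φ (q y) := fun φ s _ => hq (φ ⁻¹' s)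
  let κ : M → Measure M := fun y => μ.restrict (G (q y))
  have hκ : Measurable κ := Measure.measurable_of_measurable_coe _ fun B hB =>
    hqm (fun a => μ.restrict (G a) B)
  let ρ := μ.bind κ
  have hρ : ∀ B, MeasurableSet B → ρ B = ∫⁻ y, μ (B ∩ G (q y)) ∂μ := by
    intro B hB
    rw [Measure.bind_apply hB hκ.aemeasurable]
    exact lintegral_congr fun y => Measure.restrict_apply hB
  have hρu : ρ univ < μ univ * μ univ := by
    rw [hρ _ MeasurableSet.univ]
    calc _ ≤ ∫⁻ y, μ univ / 2 ∂μ := lintegral_mono fun y => by simpa using (hGlt (q y)).le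
      _ = μ univ / 2 * μ univ := by simp
      _ < _ := (ENNReal.mul_lt_mul_iff_left hm hmt).2 (ENNReal.half_lt_self hm hmt)
  have : IsFiniteMeasure ρ := ⟨hρu.trans (ENNReal.mul_lt_top hmt.lt_top hmt.lt_top)⟩
  have hac : ρ ≪ μ := by
    refine Measure.AbsolutelyContinuous.mk fun B hB h0 => ?_
    rw [hρ B hB]
    have : ∀ y, μ (B ∩ G (q y)) = 0 := fun y => measure_mono_null inter_subset_left h0
    simp [this]
  let h := ρ.rnDeriv μ
  have hh : Measurable h := Measure.measurable_rnDeriv _ _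
  have hρh : ∀ B, MeasurableSet B → ρ B = ∫⁻ x in B, h x ∂μ := by
    intro B hB
    rw [← withDensity_apply _ hB, Measure.withDensity_rnDeriv_eq _ _ hac]
  let P := {x | h x < μ univ}
  have hP : MeasurableSet P := measurableSet_lt hh measurable_const
  have hP0 : μ P ≠ 0 := by
    intro h0
    have : ∀ᵐ x ∂μ, μ univ ≤ h x := by
      rw [ae_iff]; simpa [P] using h0
    have h3 : ∫⁻ x, μ univ ∂μ ≤ ∫⁻ x, h x ∂μ := lintegral_mono_ae this
    rw [lintegral_const] at h3
    have h4 := hρh univ MeasurableSet.univ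
    rw [Measure.restrict_univ] at h4
    exact absurd hρu (not_lt.2 (h4 ▸ h3))
  have key : ∀ B, MeasurableSet B → B ⊆ P → μ B ≠ 0 → μ (q ⁻¹' {a | μ (B \ G a) = 0}) = 0 := by
    intro B hB hBP hB0
    refine (hatom _).resolve_right fun hc => ?_
    have hae : ∀ᵐ y ∂μ, μ (B ∩ G (q y)) = μ B := by
      have : ∀ᵐ y ∂μ, μ (B \ G (q y)) = 0 := by
        rw [ae_iff]; exact hc
      filter_upwards [this] with y hy
      have := measure_inter_add_sdiff (μ := μ) B (hGo (q y)).measurableSet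
      rw [hy, add_zero] at this; exact this
    have h1 : ρ B = μ B * μ univ := by
      rw [hρ B hB, lintegral_congr_ae hae]; simp
    have h2 : ∫⁻ x in B, h x ∂μ < ∫⁻ x in B, μ univ ∂μ :=
      setLIntegral_strict_mono hB hB0 measurable_const
        (by rw [← hρh B hB]; exact measure_ne_top _ _) (ae_of_all _ fun x hx => hBP hx)
    rw [← hρh B hB, h1, setLIntegral_const, mul_comm] at h2
    exact lt_irrefl _ h2
  -- good families
  let Bt : Finset J → Set M := fun t => P \ ⋃ a ∈ t, G a
  have hBm : ∀ t, MeasurableSet (Bt t) := fun t =>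
    hP.diff (isOpen_biUnion fun a _ => hGo a).measurableSet
  let good : Set (Set J) := {A | ∀ t : Finset J, (t : Set J) ⊆ A → μ (Bt t) ≠ 0}
  obtain ⟨A, hA⟩ : ∃ A, Maximal (· ∈ good) A := by
    refine zorn_subset good fun c hc hch => ⟨⋃₀ c, fun t ht => ?_, fun s hs => subset_sUnion_of_mem hs⟩
    rcases c.eq_empty_or_nonempty with rfl | hne
    · have : t = ∅ := by
        rw [← Finset.coe_eq_empty]; exact subset_empty_iff.1 (by simpa using ht)
      subst this; simpa [Bt] using hP0
    · obtain ⟨s, hs, hts⟩ := DirectedOn.exists_mem_subset_of_finset_subset_biUnion hne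
        (hch.directedOn) (s := t) (f := id) (by simpa [sUnion_eq_biUnion] using ht)
      exact hc hs t hts
  have hcof : ∀ a, ∃ b ∈ A, a ≤ b := by
    intro a
    by_contra! hlt
    let W : Finset (Iio a) → Set J := fun t =>
      {b | (t.map (Function.Embedding.subtype _) : Set J) ⊆ A ∧
        μ (Bt (t.map (Function.Embedding.subtype _)) \ G b) = 0}
    have hW := hcomp a W fun t => by
      by_cases ht : (t.map (Function.Embedding.subtype _) : Set J) ⊆ A
      · have := key (Bt (t.map (Function.Embedding.subtype _))) (hBm _) sdiff_subset (hA.1 _ ht)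
        exact measure_mono_null (fun y hy => hy.2) this
      · convert measure_empty (μ := μ)
        ext y; simp [W]; intro h; exact absurd (by simpa using h) ht
    have : ∃ y, q y ∉ (⋃ t, W t) ∪ Iic a := by
      by_contra! hall
      apply hm
      refine measure_mono_null ?_ (measure_union_null hW (hIic a))
      intro y _
      exact hall y
    obtain ⟨y, hy⟩ := this
    set b := q y
    have hb1 : b ∉ ⋃ t, W t := fun h => hy (Or.inl h)
    have hb2 : a < b := by
      by_contra! h; exact hy (Or.inr h)
    have hbA : b ∉ A := fun h => absurd (hlt b h) (not_lt.2 hb2.le)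
    have hins : insert b A ∈ good := by
      classical
      intro t ht
      have hsub : ((t.erase b : Finset J) : Set J) ⊆ A := by
        intro x hx
        simp at hx
        exact (ht hx.1).resolve_left hx.2
      let t' : Finset (Iio a) := (t.erase b).subtype (· ∈ Iio a)
      have ht' : t'.map (Function.Embedding.subtype _) = t.erase b := by
        apply Finset.subtype_map_of_mem
        intro x hx; exact hlt x (hsub hx)
      have h1 : μ (Bt (t.erase b) \ G b) ≠ 0 := by
        intro h0
        apply hb1
        refine mem_iUnion.2 ⟨t', ?_, ?_⟩
        · rw [ht']; exact hsub
        · rw [ht']; exact h0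
      refine fun h0 => h1 (measure_mono_null ?_ h0)
      intro x hx
      refine ⟨hx.1.1, fun hx2 => ?_⟩
      obtain ⟨c, hc, hxc⟩ := mem_iUnion₂.1 hx2
      by_cases hcb : c = b
      · subst hcb; exact hx.2 hxc
      · exact hx.1.2 (mem_iUnion₂.2 ⟨c, Finset.mem_erase.2 ⟨hcb, hc⟩, hxc⟩)
    exact hbA (hA.2 hins (subset_insert _ _) (mem_insert _ _))
  obtain ⟨-, K, hK, hK0⟩ := hR
  obtain ⟨t, htA, htK⟩ := hK.elim_finite_subcover_image (b := A) (c := G) (fun a _ => hGo a) (by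
    intro x _
    obtain ⟨b, hb, hab⟩ := hcof (q x)
    exact mem_iUnion₂.2 ⟨b, hb, hG b hab⟩)
  obtain ⟨hfin, htK⟩ := htK
  refine hA.1 hfin.toFinset (by simpa using htA) (hK0 _ (hBm _) ?_)
  rw [Set.disjoint_left]
  rintro x ⟨-, hx⟩ hxK
  apply hx
  simpa using htK hxK

/-- Lusin for Cantor valued maps, as an outer regularity statement. -/
lemma cantor_open {M : Type*} [TopologicalSpace M] [MeasurableSpace M] [BorelSpace M]
    (μ : Measure M) [IsFiniteMeasure μ] (hR : Rad μ) (Q : M → ℕ → Bool)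
    (hQ : ∀ S, MeasurableSet (Q ⁻¹' S)) (T : Set (ℕ → Bool)) (hT : μ (Q ⁻¹' T) = 0)
    (ε : ENNReal) (hε : ε ≠ 0) : ∃ V, T ⊆ V ∧ IsOpen V ∧ μ (Q ⁻¹' V) < ε := by
  have hε4 : ε / 2 / 2 ≠ 0 := by simp [hε]
  obtain ⟨δ, hδ, hδs⟩ := ENNReal.exists_pos_sum_of_countable' hε4 ℕ
  choose F1 hF1 hF1c hF1l using fun n =>
    hR.1 _ (hQ {s | s n = true}) (δ n) (hδ n).ne'
  choose F2 hF2 hF2c hF2l using fun n =>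
    hR.1 _ (hQ {s | s n = false}) (δ n) (hδ n).ne'
  obtain ⟨F0, hF0, hF0c, hF0l⟩ := hR.1 _ (hQ Tᶜ) (ε / 2) (by simp [hε])
  obtain ⟨-, K, hK, hK0⟩ := hR
  let L := F0 ∩ ⋂ n, (F1 n ∪ F2 n)
  have hL : IsClosed L := hF0c.inter (isClosed_iInter fun n => (hF1c n).union (hF2c n))
  have hcont : ContinuousOn Q L := by
    rw [continuousOn_pi]
    intro n
    have h1 : ContinuousOn (fun x => Q x n) (F1 n) :=
      (continuousOn_const (c := true)).congr fun x hx => hF1 n hx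
    have h2 : ContinuousOn (fun x => Q x n) (F2 n) :=
      (continuousOn_const (c := false)).congr fun x hx => hF2 n hx
    exact (h1.union_of_isClosed h2 (hF1c n) (hF2c n)).mono fun x hx => mem_iInter.1 hx.2 n
  have hC : IsCompact (Q '' (K ∩ L)) :=
    (hK.inter_right hL).image_of_continuousOn (hcont.mono inter_subset_right)
  refine ⟨(Q '' (K ∩ L))ᶜ, ?_, hC.isClosed.isOpen_compl, ?_⟩
  · rintro s hs ⟨x, hx, rfl⟩
    exact hF0 hx.2.1 hs
  have h1 : μ (Q ⁻¹' (Q '' (K ∩ L))ᶜ ∩ L) = 0 := by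
    refine hK0 _ ((hQ _).inter hL.measurableSet) ?_
    rw [Set.disjoint_left]
    rintro x ⟨hx, hxL⟩ hxK
    exact hx ⟨x, ⟨hxK, hxL⟩, rfl⟩
  have hLc : μ Lᶜ < ε ∨ ε = ⊤ := by
    by_cases hεt : ε = ⊤
    · exact Or.inr hεt
    left
    have hsub : Lᶜ ⊆ (Q ⁻¹' T ∪ (Q ⁻¹' Tᶜ \ F0)) ∪
        ((⋃ n, (Q ⁻¹' {s | s n = true}) \ F1 n) ∪ (⋃ n, (Q ⁻¹' {s | s n = false}) \ F2 n)) := by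
      intro x hx
      by_contra hcon
      simp only [mem_union, mem_iUnion, not_or, not_exists] at hcon
      obtain ⟨⟨h1, h2⟩, h3, h4⟩ := hcon
      apply hx
      refine ⟨by_contra fun h => h2 ⟨h1, h⟩, mem_iInter.2 fun n => ?_⟩
      cases hb : Q x n
      · exact Or.inr (by_contra fun h => h4 n ⟨hb, h⟩)
      · exact Or.inl (by_contra fun h => h3 n ⟨hb, h⟩)
    have hs1 : μ (⋃ n, (Q ⁻¹' {s | s n = true}) \ F1 n) ≤ ∑' n, δ n :=
      (measure_iUnion_le _).trans (ENNReal.tsum_le_tsum fun n => (hF1l n).le)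
    have hs2 : μ (⋃ n, (Q ⁻¹' {s | s n = false}) \ F2 n) ≤ ∑' n, δ n :=
      (measure_iUnion_le _).trans (ENNReal.tsum_le_tsum fun n => (hF2l n).le)
    calc μ Lᶜ ≤ _ := measure_mono hsub
      _ ≤ _ := measure_union_le _ _
      _ ≤ (μ (Q ⁻¹' T) + μ (Q ⁻¹' Tᶜ \ F0)) + (ε/2/2 + ε/2/2) :=
        add_le_add (measure_union_le _ _) ((measure_union_le _ _).trans
          (add_le_add (hs1.trans hδs.le) (hs2.trans hδs.le)))
      _ = μ (Q ⁻¹' Tᶜ \ F0) + ε / 2 := by rw [hT, zero_add, ENNReal.add_halves]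
      _ < ε / 2 + ε / 2 := ENNReal.add_lt_add_right (ENNReal.div_ne_top hεt (by simp)) hF0l
      _ = ε := ENNReal.add_halves _
  rcases hLc with hLc | rfl
  · refine lt_of_le_of_lt ?_ hLc
    calc μ (Q ⁻¹' (Q '' (K ∩ L))ᶜ) ≤ μ ((Q ⁻¹' (Q '' (K ∩ L))ᶜ ∩ L) ∪ Lᶜ) :=
        measure_mono (by intro x hx; by_cases hxL : x ∈ L; exacts [Or.inl ⟨hx, hxL⟩, Or.inr hxL])
      _ ≤ _ := measure_union_le _ _
      _ = μ Lᶜ := by rw [h1, zero_add]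
  · exact measure_lt_top _ _

/-- No atoms: there is a Cantor valued map with null fibres. -/
lemma exists_null_fibres {M J : Type*} [MeasurableSpace M]
    (μ : Measure M) [IsFiniteMeasure μ] (q : M → J)
    (hq : ∀ S, MeasurableSet (q ⁻¹' S))
    (hna : ∀ S, μ (q ⁻¹' S) ≠ 0 → ∃ T ⊆ S, μ (q ⁻¹' T) ≠ 0 ∧ μ (q ⁻¹' (S \ T)) ≠ 0) :
    ∃ p : J → ℕ → Bool, ∀ c, μ (q ⁻¹' (p ⁻¹' {c})) = 0 := by
  classical
  have hqm : ∀ φ : J → ENNReal, Measurable fun y => φ (q y) := fun φ s _ => hq (φ ⁻¹' s)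
  let Φ : (J → ℕ → Bool) → ENNReal := fun p => ∫⁻ y, μ (q ⁻¹' (p ⁻¹' {p (q y)})) ∂μ
  have hfin : ∀ p, Φ p ≠ ⊤ := by
    intro p
    refine ne_top_of_le_ne_top ?_
      (lintegral_mono (g := fun _ => μ univ) fun y => measure_mono (subset_univ _))
    rw [lintegral_const]
    exact ENNReal.mul_ne_top (measure_ne_top _ _) (measure_ne_top _ _)
  have hmono : ∀ p p' : J → ℕ → Bool, (∀ i j, p i = p j → p' i = p' j) → Φ p ≤ Φ p' := by
    intro p p' h
    exact lintegral_mono fun y => measure_mono fun x hx => h _ _ hx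
  obtain ⟨u, -, hu, humem⟩ := exists_seq_tendsto_sInf (S := range Φ) ⟨_, mem_range_self fun _ _ => true⟩
    (OrderBot.bddBelow _)
  choose pk hpk using humem
  let p : J → ℕ → Bool := fun j n => pk n.unpair.1 j n.unpair.2
  have hp : ∀ p', Φ p ≤ Φ p' := by
    intro p'
    have h1 : ∀ k, Φ p ≤ u k := by
      intro k
      rw [← hpk k]
      refine hmono _ _ fun i j hij => ?_
      ext n
      have := congrFun hij (Nat.pair k n)
      simpa [p] using this
    exact (ge_of_tendsto' hu h1).trans (sInf_le (mem_range_self p'))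
  refine ⟨p, fun c => by_contra fun hc => ?_⟩
  obtain ⟨T, hT, hT1, hT2⟩ := hna _ hc
  let p' : J → ℕ → Bool := fun j n => Nat.casesOn n (decide (j ∈ T)) (fun n => p j n)
  have hp'0 : ∀ j, p' j 0 = decide (j ∈ T) := fun j => rfl
  have hp's : ∀ j n, p' j (n + 1) = p j n := fun j n => rfl
  have hp'p : ∀ i j, p' i = p' j → p i = p j := by
    intro i j h
    ext n
    rw [← hp's, ← hp's, h]
  refine absurd (hp p') (not_le.2 ?_)
  refine lintegral_strict_mono_of_ae_le_of_ae_lt_on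
    (hqm fun j => μ (q ⁻¹' (p ⁻¹' {p j}))).aemeasurable (hfin _)
    (ae_of_all _ fun y => measure_mono fun x hx => hp'p _ _ hx) (s := q ⁻¹' T) hT1
    (ae_of_all _ fun y hy => ?_)
  have hyc : p (q y) = c := hT hy
  rw [hyc]
  have hsub : q ⁻¹' (p' ⁻¹' {p' (q y)}) ⊆ q ⁻¹' T := by
    intro x hx
    have : p' (q x) 0 = p' (q y) 0 := congrFun hx 0
    rw [hp'0, hp'0] at this
    have hy' : q y ∈ T := hy
    simpa [hy'] using this
  refine (measure_mono hsub).trans_lt ?_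
  have h3 : μ (q ⁻¹' T) + μ (q ⁻¹' (p ⁻¹' {c} \ T)) = μ (q ⁻¹' (p ⁻¹' {c})) := by
    rw [← measure_union _ (hq _), ← preimage_union, union_sdiff_cancel hT]
    rw [Set.disjoint_left]
    intro x hx hx2
    exact hx2.2 hx
  rw [← h3]
  exact ENNReal.lt_add_right (measure_ne_top _ _) hT2

lemma caseB {M J : Type*} [TopologicalSpace M] [MeasurableSpace M] [BorelSpace M]
    (μ : Measure M) [IsFiniteMeasure μ] (hR : Rad μ) [LinearOrder J] (q : M → J)
    (hq : ∀ S, MeasurableSet (q ⁻¹' S)) (hIic : ∀ a : J, μ (q ⁻¹' (Iic a)) = 0)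
    (hcomp : ∀ (a : J) (W : Finset (Iio a) → Set J), (∀ t, μ (q ⁻¹' (W t)) = 0) →
      μ (q ⁻¹' (⋃ t, W t)) = 0)
    (hna : ∀ S, μ (q ⁻¹' S) ≠ 0 → ∃ T ⊆ S, μ (q ⁻¹' T) ≠ 0 ∧ μ (q ⁻¹' (S \ T)) ≠ 0) :
    μ = 0 := by
  by_contra hμ
  have hm : μ univ ≠ 0 := by simpa using hμ
  have hmt : μ univ ≠ ⊤ := measure_ne_top _ _
  have hm2 : μ univ / 2 ≠ 0 := by simp [hm]
  obtain ⟨p, hp⟩ := exists_null_fibres μ q hq hna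
  have hnull : ∀ a, μ ((fun x => p (q x)) ⁻¹' (p '' Iio a)) = 0 := by
    intro a
    have := hcomp a (fun t => ⋃ j ∈ t, p ⁻¹' {p j.1}) (fun t => by
      rw [preimage_iUnion₂]
      exact (measure_biUnion_null_iff t.countable_toSet).2 fun j _ => hp _)
    refine measure_mono_null ?_ this
    rintro x ⟨j, hj, hjx⟩
    exact mem_iUnion.2 ⟨{⟨j, hj⟩}, by simpa using hjx.symm⟩
  choose G hG hGo hGlt using fun a =>
    cantor_open μ hR (fun x => p (q x)) (fun S => hq (p ⁻¹' S)) _ (hnull a) _ hm2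
  let E : Set (M × M) := {z | p (q z.1) ∈ G (q z.2)}
  have hE : MeasurableSet E := by
    have hb := TopologicalSpace.isBasis_countableBasis (ℕ → Bool)
    have : E = ⋃ B ∈ TopologicalSpace.countableBasis (ℕ → Bool),
        (q ⁻¹' (p ⁻¹' B)) ×ˢ (q ⁻¹' {a | B ⊆ G a}) := by
      ext z
      simp only [mem_iUnion, E]
      constructor
      · intro hz
        obtain ⟨B, hB, hzB, hBG⟩ := hb.exists_subset_of_mem_open hz (hGo _)
        exact ⟨B, hB, hzB, hBG⟩
      · rintro ⟨B, hB, hzB, hBG⟩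
        exact hBG hzB
    rw [this]
    exact MeasurableSet.biUnion (TopologicalSpace.countable_countableBasis _)
      fun B _ => (hq _).prod (hq _)
  have h1 : (μ.prod μ) E ≤ μ univ / 2 * μ univ := by
    rw [Measure.prod_apply_symm hE, ← lintegral_const]
    exact lintegral_mono fun y => (hGlt (q y)).le
  have h2 : μ univ * μ univ ≤ (μ.prod μ) E := by
    rw [Measure.prod_apply hE, ← lintegral_const]
    refine lintegral_mono fun x => ?_
    calc μ univ ≤ μ (q ⁻¹' (Iic (q x)) ∪ Prod.mk x ⁻¹' E) := measure_mono fun y _ => by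
          rcases le_or_gt (q y) (q x) with h | h
          · exact Or.inl h
          · exact Or.inr (hG _ ⟨q x, h, rfl⟩)
      _ ≤ _ := measure_union_le _ _
      _ = μ (Prod.mk x ⁻¹' E) := by rw [hIic, zero_add]
  exact absurd (h2.trans h1) (not_le.2
    ((ENNReal.mul_lt_mul_iff_left hm hmt).2 (ENNReal.half_lt_self hm hmt)))

lemma core_null {M I : Type*} [TopologicalSpace M] [MeasurableSpace M] [BorelSpace M]
    (μ : Measure M) [IsFiniteMeasure μ] (hR : Rad μ) (q : M → I)
    (hq : ∀ S, MeasurableSet (q ⁻¹' S)) (hsing : ∀ i, μ (q ⁻¹' {i}) = 0) : μ = 0 := by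
  classical
  by_contra hμ
  have hm : μ univ ≠ 0 := by simpa using hμ
  let C : Set Cardinal := {c | ∃ 𝒮 : Set (Set I), Cardinal.mk 𝒮 = c ∧
    (∀ s ∈ 𝒮, μ (q ⁻¹' s) = 0) ∧ μ (q ⁻¹' ⋃₀ 𝒮) ≠ 0}
  have hC : C.Nonempty := by
    refine ⟨_, range (fun i : I => ({i} : Set I)), rfl, ?_, ?_⟩
    · rintro s ⟨i, rfl⟩; exact hsing i
    · convert hm using 2
      ext x; simp
  have hmin : ∀ c ∈ C, sInf C ≤ c := fun c hc => csInf_le' hc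
  obtain ⟨𝒮, hcard, hnull, hpos⟩ := csInf_mem hC
  set κ := sInf C with hκ
  have hU : ∀ (ι : Type _) (W : ι → Set I), Cardinal.mk ι < κ → (∀ t, μ (q ⁻¹' (W t)) = 0) →
      μ (q ⁻¹' ⋃ t, W t) = 0 := by
    intro ι W hι hW
    by_contra h
    refine absurd (hmin (Cardinal.mk (range W)) ⟨range W, rfl, ?_, ?_⟩)
      (not_le.2 (Cardinal.mk_range_le.trans_lt hι))
    · rintro s ⟨t, rfl⟩; exact hW t
    · rwa [sUnion_range]
  have hκ0 : Cardinal.aleph0 < κ := by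
    by_contra! h
    rw [← hcard, Cardinal.mk_le_aleph0_iff] at h
    apply hpos
    rw [preimage_sUnion]
    exact (measure_biUnion_null_iff (Set.countable_coe_iff.1 h)).2 hnull
  let J := κ.ord.ToType
  have hJ : Cardinal.mk J = κ := by simp [J]
  obtain ⟨e⟩ : Nonempty (J ≃ 𝒮) := Cardinal.eq.1 (hJ.trans hcard.symm)
  have hIio : ∀ a : J, Cardinal.mk (Iio a) < κ := by
    intro a
    have := Cardinal.mk_Iio_lt a (by simp [J])
    rwa [hJ] at this
  have hJne : Nonempty J := by
    rw [← Cardinal.mk_ne_zero_iff, hJ]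
    exact (Cardinal.aleph0_pos.trans hκ0).ne'
  have hr : ∀ i, ∃ j : J, i ∈ ⋃₀ 𝒮 → i ∈ (e j).1 := by
    intro i
    by_cases h : i ∈ ⋃₀ 𝒮
    · obtain ⟨s, hs, his⟩ := h
      exact ⟨e.symm ⟨s, hs⟩, fun _ => by simpa using his⟩
    · exact ⟨hJne.some, fun h' => absurd h' h⟩
  choose r hr using hr
  let q' : M → J := fun x => r (q x)
  have hq' : ∀ S, MeasurableSet (q' ⁻¹' S) := fun S => hq (r ⁻¹' S)
  let μ' := μ.restrict (q ⁻¹' ⋃₀ 𝒮)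
  have hμ' : ∀ S, μ' (q' ⁻¹' S) = μ (q ⁻¹' (r ⁻¹' S ∩ ⋃₀ 𝒮)) := fun S =>
    Measure.restrict_apply (hq' S)
  have hR' : Rad μ' := hR.restrict _
  have hIic' : ∀ a : J, μ' (q' ⁻¹' (Iic a)) = 0 := by
    intro a
    rw [hμ']
    have h1 := hU (Iio a) (fun j => (e j.1).1) (hIio a) fun j => hnull _ (e j.1).2
    have h2 := hnull _ (e a).2
    refine measure_mono_null ?_ (measure_union_null h1 h2)
    rintro x ⟨hx, hxS⟩
    have hx' : r (q x) ≤ a := hx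
    have := hr _ hxS
    rcases hx'.lt_or_eq with h | h
    · exact Or.inl (mem_iUnion.2 ⟨⟨r (q x), h⟩, this⟩)
    · right; rw [h] at this; exact this
  have hcomp' : ∀ (a : J) (W : Finset (Iio a) → Set J), (∀ t, μ' (q' ⁻¹' (W t)) = 0) →
      μ' (q' ⁻¹' (⋃ t, W t)) = 0 := by
    intro a W hW
    rw [hμ', preimage_iUnion, iUnion_inter]
    refine hU _ _ ?_ fun t => by rw [← hμ']; exact hW t
    rcases finite_or_infinite (Iio a) with h | h
    · exact (Cardinal.lt_aleph0_of_finite _).trans hκ0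
    · rw [Cardinal.mk_finset_of_infinite]; exact hIio a
  have hμ'0 : μ' ≠ 0 := by
    intro h
    apply hpos
    rwa [Measure.restrict_eq_zero] at h
  by_cases hat : ∃ S, μ' (q' ⁻¹' S) ≠ 0 ∧ ∀ T ⊆ S, μ' (q' ⁻¹' T) = 0 ∨ μ' (q' ⁻¹' (S \ T)) = 0
  · obtain ⟨S, hS, hST⟩ := hat
    have hμ'' : ∀ T, μ'.restrict (q' ⁻¹' S) (q' ⁻¹' T) = μ' (q' ⁻¹' (T ∩ S)) := fun T =>
      Measure.restrict_apply (hq' T)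
    have := caseA (μ'.restrict (q' ⁻¹' S)) (hR'.restrict _) q' hq'
      (fun a => by
        rw [hμ'']; exact measure_mono_null (preimage_mono inter_subset_left) (hIic' a))
      (fun a W hW => by
        rw [hμ'', iUnion_inter]
        exact hcomp' a _ fun t => by rw [← hμ'']; exact hW t)
      (fun T => by
        rw [hμ'', hμ'']
        rcases hST (T ∩ S) inter_subset_right with h | h
        · exact Or.inl h
        · right
          convert h using 3
          ext x; simp only [mem_inter_iff, mem_compl_iff, mem_sdiff]; tauto)
    rw [Measure.restrict_eq_zero] at this
    exact hS this
  · push Not at hat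
    exact hμ'0 (caseB μ' hR' q' hq' hIic' hcomp' hat)

lemma core_countable {M I : Type*} [TopologicalSpace M] [MeasurableSpace M] [BorelSpace M]
    (μ : Measure M) [IsFiniteMeasure μ] [μ.Regular] (q : M → I)
    (hq : ∀ S, MeasurableSet (q ⁻¹' S)) : ∃ J : Set I, J.Countable ∧ μ (q ⁻¹' Jᶜ) = 0 := by
  refine ⟨{i | 0 < μ (q ⁻¹' {i})}, ?_, ?_⟩
  · refine Measure.countable_meas_pos_of_disjoint_iUnion (fun i => hq _) ?_
    intro i j hij
    exact Disjoint.preimage _ (by simpa using hij)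
  set E := q ⁻¹' {i | 0 < μ (q ⁻¹' {i})}ᶜ with hEdef
  have hE : MeasurableSet E := hq _
  by_contra hpos
  have hlt : μ Eᶜ < μ univ := by
    rw [← measure_add_measure_compl hE, add_comm]
    exact ENNReal.lt_add_right (measure_ne_top _ _) hpos
  obtain ⟨K, -, hK, hKlt⟩ := Measure.Regular.innerRegular (μ := μ) isOpen_univ _ hlt
  have hKE : μ (K ∩ E) ≠ 0 := by
    intro h0
    have := measure_inter_add_sdiff (μ := μ) K hE
    rw [h0, zero_add] at this
    have h2 : μ (K \ E) ≤ μ Eᶜ := measure_mono fun x hx => hx.2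
    rw [this] at h2
    exact absurd hKlt (not_lt.2 h2)
  have hR : Rad (μ.restrict (K ∩ E)) := by
    refine ⟨fun A hA ε hε => ?_, K, hK, fun A hA hd => ?_⟩
    · obtain ⟨U, hAU, hU, -, hlt⟩ :=
        hA.compl.exists_isOpen_sdiff_lt (μ := μ) (measure_ne_top _ _) hε
      refine ⟨Uᶜ, compl_subset_comm.1 hAU, hU.isClosed_compl, ?_⟩
      refine (Measure.restrict_apply_le _ _).trans_lt (lt_of_le_of_lt (measure_mono ?_) hlt)
      intro x hx
      exact ⟨by simpa using hx.2, by simpa using hx.1⟩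
    · rw [Measure.restrict_apply hA]
      convert measure_empty (μ := μ)
      ext x
      simp only [mem_inter_iff, mem_empty_iff_false, iff_false]
      rintro ⟨h1, h2, -⟩
      exact Set.disjoint_left.1 hd h1 h2
  have := core_null _ hR q hq (fun i => by
    rw [Measure.restrict_apply (hq _)]
    by_cases hi : μ (q ⁻¹' {i}) = 0
    · exact measure_mono_null inter_subset_left hi
    · convert measure_empty (μ := μ)
      ext x
      simp only [mem_inter_iff, mem_empty_iff_false, iff_false]
      rintro ⟨h1, -, h2⟩
      have h1' : q x = i := h1
      apply h2
      rw [h1']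
      exact pos_iff_ne_zero.2 hi)
  rw [Measure.restrict_eq_zero] at this
  exact hKE this

/-- Discretisation of a metric space, all preimages being Borel. -/
lemma exists_discretisation (N : Type*) [MetricSpace N] [MeasurableSpace N] [BorelSpace N]
    (δ : ℝ) (hδ : 0 < δ) :
    ∃ c : N → N, (∀ x, dist x (c x) < δ) ∧ ∀ S, MeasurableSet (c ⁻¹' S) := by
  obtain ⟨hlin, hwf⟩ := exists_wellFoundedLT N
  have hne : ∀ x : N, {a | dist x a < δ}.Nonempty := fun x => ⟨x, by simpa using hδ⟩
  let c : N → N := fun x => wellFounded_lt.min {a | dist x a < δ} (hne x)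
  have hc : ∀ x, dist x (c x) < δ := fun x => wellFounded_lt.min_mem _ (hne x)
  have hcmin : ∀ x a, dist x a < δ → c x ≤ a := fun x a h => by
    exact not_lt.1 (wellFounded_lt.not_lt_min {a | dist x a < δ} h)
  refine ⟨c, hc, fun S => ?_⟩
  let P : ℕ → Set N := fun n => {x | c x ∈ S ∧ dist x (c x) ≤ δ - 1 / (n + 1)}
  have hU : c ⁻¹' S = ⋃ n, P n := by
    ext x
    simp only [mem_preimage, mem_iUnion, P, mem_ofPred_eq]
    constructor
    · intro h
      obtain ⟨n, hn⟩ := exists_nat_one_div_lt (sub_pos.2 (hc x))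
      exact ⟨n, h, by linarith⟩
    · rintro ⟨n, h, -⟩; exact h
  rw [hU]
  refine MeasurableSet.iUnion fun n => IsClosed.measurableSet ?_
  have hn : (0:ℝ) < 1 / (n + 1) := by positivity
  refine isClosed_of_closure_subset fun x hx => ?_
  rw [Metric.mem_closure_iff] at hx
  -- points of `P n` near `x` share their centre
  have hsame : ∀ y ∈ P n, ∀ z ∈ P n, dist y z < 1 / (n + 1) → c y ≤ c z := by
    intro y hy z hz hyz
    apply hcmin
    have := dist_triangle y z (c z)
    linarith [hz.2]
  obtain ⟨y, hy, hxy⟩ := hx (1 / (n + 1) / 2) (by positivity)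
  have hd : dist x (c y) ≤ δ - 1 / (n + 1) := by
    refine le_of_forall_pos_le_add fun η hη => ?_
    obtain ⟨z, hz, hxz⟩ := hx (min η (1 / (n + 1) / 2)) (by positivity)
    have h1 := hxz.trans_le (min_le_left _ _)
    have h2 := hxz.trans_le (min_le_right _ _)
    have h3 : dist y z < 1 / (n + 1) := by
      have := dist_triangle_left y z x
      linarith
    have h4 : c y = c z := le_antisymm (hsame y hy z hz h3) (hsame z hz y hy (by rwa [dist_comm]))
    rw [h4]
    have := dist_triangle x z (c z)
    linarith [hz.2]
  have hcx : c x = c y := by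
    apply le_antisymm
    · exact hcmin _ _ (by linarith)
    · have hpos : 0 < δ - dist x (c x) := by linarith [hc x]
      obtain ⟨z, hz, hxz⟩ := hx (min (δ - dist x (c x)) (1 / (n + 1) / 2)) (by positivity)
      have h1 := hxz.trans_le (min_le_left _ _)
      have h2 := hxz.trans_le (min_le_right _ _)
      have h3 : dist y z < 1 / (n + 1) := by
        have := dist_triangle_left y z x
        linarith
      refine (hsame y hy z hz h3).trans (hcmin _ _ ?_)
      have := dist_triangle_left z (c x) x
      linarith
  exact ⟨by rw [hcx]; exact hy.1, by rw [hcx]; exact hd⟩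

lemma simple_lusin {M N : Type*} [TopologicalSpace M] [MeasurableSpace M] [BorelSpace M]
    (μ : Measure M) [IsFiniteMeasure μ] [μ.Regular] (s : M → N) (V : Finset N)
    (hV : ∀ x, s x ∈ V) (hs : ∀ v, MeasurableSet (s ⁻¹' {v})) (η : ENNReal) (hη : η ≠ 0) :
    ∃ F, IsClosed F ∧ μ Fᶜ ≤ η ∧
      ∀ {Y : Type} [TopologicalSpace Y] (θ : N → Y), ContinuousOn (fun x => θ (s x)) F := by
  obtain ⟨δ, hδ, hδs⟩ := ENNReal.exists_pos_sum_of_countable' hη V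
  have h : ∀ v : V, ∃ F, F ⊆ s ⁻¹' {v.1} ∧ IsClosed F ∧ μ (s ⁻¹' {v.1} \ F) < δ v := by
    intro v
    obtain ⟨U, hAU, hU, -, hlt⟩ :=
      (hs v).compl.exists_isOpen_sdiff_lt (μ := μ) (measure_ne_top _ _) (hδ v).ne'
    refine ⟨Uᶜ, compl_subset_comm.1 hAU, hU.isClosed_compl, ?_⟩
    refine lt_of_le_of_lt (measure_mono ?_) hlt
    intro x hx
    exact ⟨by simpa using hx.2, by simpa using hx.1⟩
  choose F hF hFc hFl using h
  refine ⟨⋃ v, F v, isClosed_iUnion_of_finite hFc, ?_, ?_⟩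
  · refine le_trans (measure_mono (t := ⋃ v : V, s ⁻¹' {v.1} \ F v) ?_)
      ((measure_iUnion_le _).trans ((ENNReal.tsum_le_tsum fun v => (hFl v).le).trans hδs.le))
    intro x hx
    exact mem_iUnion.2 ⟨⟨s x, hV x⟩, rfl, fun h => hx (mem_iUnion.2 ⟨_, h⟩)⟩
  · intro Y _ θ
    refine (locallyFinite_of_finite F).continuousOn_iUnion hFc fun v => ?_
    refine (continuousOn_const (c := θ v.1)).congr fun x hx => ?_
    have : s x = v.1 := hF v hx
    simp only [this]
/-- Continuous maps are dense in `L¹_μ(M,N)`: for `M` a normal topological space with a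
regular finite Borel measure `μ`, `N` a geodesically convex metric space with base point `o`,
every measurable `f : M → N` with `∫ dist(f x, o) dμ < ∞` can be approximated in the `L¹`
distance by continuous maps belonging to `L¹_μ(M,N)`. -/
theorem stmt_2 {M N : Type*} [TopologicalSpace M] [NormalSpace M]
    [MeasurableSpace M] [BorelSpace M]
    (μ : Measure M) [IsFiniteMeasure μ] [μ.Regular]
    [MetricSpace N] [MeasurableSpace N] [BorelSpace N] (o : N)
    (hconv : ∃ τ : ℝ, 1 ≤ τ ∧ ∀ u v : N, ∃ γ : ℝ → N,
      ContinuousOn γ (Icc 0 1) ∧ γ 0 = u ∧ γ 1 = v ∧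
      ∀ s ∈ Icc (0:ℝ) 1, ∀ t ∈ Icc (0:ℝ) 1, dist (γ s) (γ t) ≤ τ * dist u v)
    (f : M → N) (hf : Measurable f)
    (hfL1 : ∫⁻ x, ENNReal.ofReal (dist (f x) o) ∂μ < ⊤)
    (ε : ℝ) (hε : 0 < ε) :
    ∃ g : M → N, Continuous g ∧
      (∫⁻ x, ENNReal.ofReal (dist (g x) o) ∂μ < ⊤) ∧
      ∫⁻ x, ENNReal.ofReal (dist (f x) (g x)) ∂μ < ENNReal.ofReal ε := by
  classical
  obtain ⟨τ, -, hconv⟩ := hconv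
  have hpc : PathConnectedSpace N := by
    refine ⟨⟨o⟩, fun u v => ?_⟩
    obtain ⟨γ, hγ, h0, h1, -⟩ := hconv u v
    exact ⟨⟨⟨fun t : unitInterval => γ t, continuousOn_iff_continuous_domRestrict.1 hγ⟩,
      by simpa using h0, by simpa using h1⟩⟩
  have hm1 : 0 < μ.real univ + 1 := by positivity
  obtain ⟨c, hcδ, hc⟩ := exists_discretisation N (ε / 4 / (μ.real univ + 1)) (by positivity)
  let q : M → N := fun x => c (f x)
  have hq : ∀ S, MeasurableSet (q ⁻¹' S) := fun S => hf (hc S)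
  obtain ⟨J, hJ, hJ0⟩ := core_countable μ q hq
  obtain ⟨j, hj⟩ := (hJ.insert o).exists_eq_range (insert_nonempty _ _)
  let A : ℕ → Set M := fun n => q ⁻¹' (j '' Iic n)ᶜ
  have hA : Filter.Tendsto (fun n => μ (A n)) Filter.atTop (nhds 0) := by
    have h1 := tendsto_measure_iInter_atTop (μ := μ) (s := A) (fun n => (hq _).nullMeasurableSet)
      (fun m n hmn => preimage_mono (compl_subset_compl.2 (image_mono (Iic_subset_Iic.2 hmn))))
      ⟨0, measure_ne_top _ _⟩
    have h2 : μ (⋂ n, A n) = 0 := by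
      refine measure_mono_null ?_ hJ0
      intro x hx hxJ
      have : q x ∈ range j := hj ▸ (mem_insert_of_mem _ hxJ)
      obtain ⟨n, hn⟩ := this
      exact mem_iInter.1 hx n ⟨n, mem_Iic.2 le_rfl, hn⟩
    rwa [h2] at h1
  have hAi := tendsto_setLIntegral_zero hfL1.ne hA
  have he : (0 : ENNReal) < ENNReal.ofReal (ε / 4) := by simpa using hε
  obtain ⟨n, hn⟩ := (hAi.eventually (gt_mem_nhds he)).exists
  let s : M → N := fun x => if x ∈ A n then o else q x
  let p : Fin (n + 2) → N := Fin.cons o (fun k : Fin (n + 1) => j k)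
  obtain ⟨γ, t, hγ⟩ := PathConnectedSpace.exists_path_through_family' p
  let V : Finset N := Finset.univ.image p
  have hsV : ∀ x, s x ∈ V := by
    intro x
    simp only [V, Finset.mem_image, Finset.mem_univ, true_and]
    by_cases hx : x ∈ A n
    · exact ⟨0, by simp [s, hx, p]⟩
    · have hx' : q x ∈ j '' Iic n := by simpa [A] using hx
      obtain ⟨k, hk, hkx⟩ := hx'
      refine ⟨Fin.succ ⟨k, Nat.lt_succ_of_le hk⟩, ?_⟩
      have h1 : s x = q x := by simp [s, hx]
      rw [h1, ← hkx]
      exact Fin.cons_succ (α := fun _ => N) o (fun k : Fin (n + 1) => j k) ⟨k, Nat.lt_succ_of_le hk⟩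
  have hsm : ∀ v, MeasurableSet (s ⁻¹' {v}) := by
    intro v
    convert hq ((fun y => if y ∈ (j '' Iic n)ᶜ then o else y) ⁻¹' {v}) using 1
    ext x
    simp [s, A]
  have hθ : ∀ v, ∃ a : unitInterval, v ∈ V → γ a = v := by
    intro v
    by_cases hv : v ∈ V
    · obtain ⟨k, -, rfl⟩ := Finset.mem_image.1 hv
      exact ⟨t k, fun _ => hγ k⟩
    · exact ⟨0, fun h => absurd h hv⟩
  choose θ hθ using hθ
  obtain ⟨R, hR⟩ : ∃ R : ℝ, ∀ a, dist (γ a) o ≤ R := by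
    obtain ⟨R, hR⟩ := (isCompact_range γ.continuous).isBounded.subset_closedBall o
    exact ⟨R, fun a => hR (mem_range_self a)⟩
  have hR0 : 0 ≤ R := dist_nonneg.trans (hR 0)
  obtain ⟨F, hFc, hFη, hFcont⟩ := simple_lusin μ s V hsV hsm
    (ENNReal.ofReal (ε / 4 / (2 * R + 1))) (by
      have : 0 < ε / 4 / (2 * R + 1) := by positivity
      simpa using this)
  obtain ⟨u, hu⟩ := ContinuousMap.exists_restrict_eq hFc
    (⟨F.domRestrict fun x => θ (s x), continuousOn_iff_continuous_domRestrict.1 (hFcont θ)⟩ :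
      C(F, unitInterval))
  have huF : ∀ x ∈ F, γ (u x) = s x := by
    intro x hx
    have : u x = θ (s x) := congrArg (fun φ : C(F, unitInterval) => φ ⟨x, hx⟩) hu
    rw [this, hθ _ (hsV x)]
  refine ⟨fun x => γ (u x), γ.continuous.comp u.continuous, ?_, ?_⟩
  · refine lt_of_le_of_lt (lintegral_mono (g := fun _ => ENNReal.ofReal R) fun x =>
      ENNReal.ofReal_le_ofReal (hR _)) ?_
    rw [lintegral_const]
    exact ENNReal.mul_lt_top ENNReal.ofReal_lt_top (measure_lt_top _ _)
  have hpt : ∀ x, ENNReal.ofReal (dist (f x) (γ (u x))) ≤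
      ENNReal.ofReal (ε / 4 / (μ.real univ + 1)) +
        ((A n).indicator (fun x => ENNReal.ofReal (dist (f x) o)) x +
          Fᶜ.indicator (fun _ => ENNReal.ofReal (2 * R)) x) := by
    intro x
    have h1 : ENNReal.ofReal (dist (f x) (s x)) ≤ ENNReal.ofReal (ε / 4 / (μ.real univ + 1)) +
        (A n).indicator (fun x => ENNReal.ofReal (dist (f x) o)) x := by
      by_cases hx : x ∈ A n
      · simp [s, hx]
      · simpa [s, hx] using ENNReal.ofReal_le_ofReal (hcδ (f x)).le
    have h2 : ENNReal.ofReal (dist (s x) (γ (u x))) ≤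
        Fᶜ.indicator (fun _ => ENNReal.ofReal (2 * R)) x := by
      by_cases hx : x ∈ F
      · simp [huF x hx]
      · rw [indicator_of_mem (show x ∈ Fᶜ from hx)]
        apply ENNReal.ofReal_le_ofReal
        have := dist_triangle_right (s x) (γ (u x)) o
        have h3 := hR (θ (s x))
        rw [hθ _ (hsV x)] at h3
        linarith [hR (u x)]
    rw [← add_assoc]
    refine le_trans ?_ (add_le_add h1 h2)
    rw [← ENNReal.ofReal_add dist_nonneg dist_nonneg]
    exact ENNReal.ofReal_le_ofReal (dist_triangle _ _ _)
  refine lt_of_le_of_lt (lintegral_mono hpt) ?_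
  rw [lintegral_add_left measurable_const,
    lintegral_add_right _ (measurable_const.indicator hFc.measurableSet.compl),
    lintegral_indicator (hq _), lintegral_indicator_const hFc.measurableSet.compl, lintegral_const]
  have e1 : ENNReal.ofReal (ε / 4 / (μ.real univ + 1)) * μ univ ≤ ENNReal.ofReal (ε / 4) := by
    rw [← ofReal_measureReal (μ := μ) (s := univ), ← ENNReal.ofReal_mul (by positivity)]
    apply ENNReal.ofReal_le_ofReal
    rw [div_mul_eq_mul_div, div_le_iff₀ hm1]
    nlinarith
  have e2 : ENNReal.ofReal (2 * R) * μ Fᶜ ≤ ENNReal.ofReal (ε / 4) := by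
    refine (mul_le_mul_right hFη _).trans ?_
    rw [← ENNReal.ofReal_mul (by positivity)]
    apply ENNReal.ofReal_le_ofReal
    rw [mul_div_assoc', div_le_iff₀ (by positivity)]
    nlinarith
  calc _ ≤ ENNReal.ofReal (ε / 4) + (ENNReal.ofReal (ε / 4) + ENNReal.ofReal (ε / 4)) :=
        add_le_add e1 (add_le_add hn.le e2)
    _ = ENNReal.ofReal (ε / 4 + (ε / 4 + ε / 4)) := by
        rw [ENNReal.ofReal_add (by positivity) (by positivity),
          ENNReal.ofReal_add (by positivity) (by positivity)]
    _ < ENNReal.ofReal ε := (ENNReal.ofReal_lt_ofReal_iff hε).2 (by linarith)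
end

section
/- Let L be a geodesically convex metric space, and (K, 𝔅_K, μ_K) a probability space where K is a normal topological space, 𝔅_K its Borel σ-algebra, and μ_K regular. Let H_{j,t} : L → L and h_j : K → K (j ∈ ℕ, t ∈ K) be maps such that H_{j,t}(x) → x uniformly in t and x, h_j(t) → t uniformly in t, and each h_j has Jacobian with respect to μ_K uniformly bounded. Then for every bounded measurable map ψ : K → L, lim_j ∫ dist_L(ψ(t), H_{j,t}(ψ(h_j(t)))) dμ_K(t) = 0. -/
open MeasureTheory Filter Set
open scoped ENNReal

theorem aux_exists_nonmeas : ∃ s : Set (ℕ → Bool), ¬ MeasurableSet s := by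
  by_contra! hcon
  obtain ⟨b, hbc, hb⟩ := (MeasurableSpace.CountablyGenerated.isCountablyGenerated (α := ℕ → Bool))
  have h1 : Cardinal.mk {t : Set (ℕ → Bool) | MeasurableSet t} ≤ Cardinal.continuum := by
    rw [hb]
    apply MeasurableSpace.cardinal_measurableSet_le_continuum
    exact (Cardinal.le_aleph0_iff_set_countable.2 hbc).trans Cardinal.aleph0_le_continuum
  have h2 : {t : Set (ℕ → Bool) | MeasurableSet t} = univ := by
    ext t; simp [hcon t]
  rw [h2, Cardinal.mk_univ, Cardinal.mk_set] at h1
  have h3 : Cardinal.mk (ℕ → Bool) = Cardinal.continuum := by simp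
  rw [h3] at h1
  exact absurd h1 (not_le.2 (Cardinal.cantor _))

theorem aux_compact {X : Type*} [tX : TopologicalSpace X] [PolishSpace X] [mX : MeasurableSpace X]
    [bX : BorelSpace X] (m : Measure X) [IsFiniteMeasure m] (f : X → X)
    (hfm : Measurable f) (hpos : m univ ≠ 0) :
    ∃ C : Set X, MeasurableSet C ∧ 0 < m C ∧ IsCompact (f '' C) := by
  obtain ⟨t', ht', hc, hP⟩ := hfm.exists_continuous
  have hb : @BorelSpace X t' mX := by
    refine @BorelSpace.mk X t' mX ?_
    rw [bX.measurable_eq]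
    exact (borel_eq_borel_of_le hP ‹_› ht').symm
  obtain ⟨C, hCc, hCm⟩ : ∃ C : Set X, @IsCompact X t' C ∧ 0 < m C := by
    let := t'
    obtain ⟨C, -, hC, h⟩ := (MeasurableSet.univ (α := X)).exists_lt_isCompact_of_ne_top
      (measure_ne_top m _) (pos_iff_ne_zero.2 hpos)
    exact ⟨C, hC, h⟩
  have hCmeas : MeasurableSet C := by
    let := t'
    exact hCc.measurableSet
  exact ⟨C, hCmeas, hCm, @IsCompact.image X X t' tX C f hCc hc⟩

theorem aux_core {X : Type*} [tX : TopologicalSpace X] [PolishSpace X] [mX : MeasurableSpace X]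
    [bX : BorelSpace X] (m : Measure X) [IsFiniteMeasure m] (f : X → X)
    (hf : ∀ S : Set X, MeasurableSet (f ⁻¹' S)) (hnull : ∀ y, m (f ⁻¹' {y}) = 0) :
    m univ = 0 := by
  by_contra hpos
  have hfm : Measurable f := fun S _ => hf S
  obtain ⟨C, hCmeas, hCm, hE⟩ := aux_compact m f hfm hpos
  have hunc : ¬ (f '' C).Countable := by
    intro hcount
    have : m C ≤ 0 := by
      calc m C ≤ m (⋃ y ∈ f '' C, f ⁻¹' {y}) := by
            apply measure_mono
            intro x hx
            simp only [mem_iUnion]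
            exact ⟨f x, mem_image_of_mem f hx, rfl⟩
        _ = 0 := (measure_biUnion_null_iff hcount).2 fun y _ => hnull y
    exact absurd hCm (not_lt.2 this)
  have hall : ∀ S ⊆ f '' C, MeasurableSet S := by
    intro S hS
    have hA : AnalyticSet (f '' (C ∩ f ⁻¹' S)) := (hCmeas.inter (hf S)).analyticSet_image hfm
    have hB : AnalyticSet (f '' (C ∩ f ⁻¹' Sᶜ)) := (hCmeas.inter (hf Sᶜ)).analyticSet_image hfm
    have hd : Disjoint (f '' (C ∩ f ⁻¹' S)) (f '' (C ∩ f ⁻¹' Sᶜ)) := by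
      rw [Set.disjoint_left]
      rintro _ ⟨x, ⟨_, hx⟩, rfl⟩ ⟨y, ⟨_, hy⟩, hxy⟩
      apply hy
      rw [hxy]; exact hx
    obtain ⟨u, hu1, hu2, hu3⟩ := hA.measurablySeparable hB hd
    have : S = u ∩ f '' C := by
      ext y; constructor
      · intro hy
        obtain ⟨x, hx, rfl⟩ := hS hy
        exact ⟨hu1 ⟨x, ⟨hx, hy⟩, rfl⟩, x, hx, rfl⟩
      · rintro ⟨hy, x, hx, rfl⟩
        by_contra hn
        exact Set.disjoint_left.1 hu2 ⟨x, ⟨hx, hn⟩, rfl⟩ hy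
    rw [this]
    exact hu3.inter hE.measurableSet
  have : PolishSpace (f '' C) := hE.isClosed.polishSpace
  have e : (f '' C) ≃ᵐ (ℕ → Bool) := PolishSpace.measurableEquivNatBoolOfNotCountable
    (by rwa [Set.countable_coe_iff])
  obtain ⟨s, hs⟩ := aux_exists_nonmeas
  apply hs
  rw [← e.measurableSet_preimage]
  have h1 : MeasurableSet (Subtype.val '' (e ⁻¹' s)) := hall _ (by
    rintro _ ⟨x, _, rfl⟩; exact x.2)
  have h2 := measurable_subtype_coe (p := (· ∈ f '' C)) h1
  rwa [Set.preimage_image_eq _ Subtype.val_injective] at h2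

theorem aux_core' {X I : Type*} [TopologicalSpace X] [PolishSpace X] [MeasurableSpace X]
    [BorelSpace X] (m : Measure X) [IsFiniteMeasure m] (p : X → I)
    (hp : ∀ S : Set I, MeasurableSet (p ⁻¹' S)) (hnull : ∀ i, m (p ⁻¹' {i}) = 0) :
    m univ = 0 := by
  rcases isEmpty_or_nonempty X with hX | hX
  · simp [Set.eq_empty_of_isEmpty]
  let s : I → X := Function.invFun p
  have hs : ∀ x, p (s (p x)) = p x := fun x => Function.invFun_eq ⟨x, rfl⟩
  refine aux_core m (s ∘ p) (fun S => hp (s ⁻¹' S)) fun y => ?_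
  refine measure_mono_null ?_ (hnull (p y))
  rintro x hx
  have hx' : s (p x) = y := hx
  rw [mem_preimage, mem_singleton_iff, ← hx', hs]

theorem aux_partition {L : Type*} [MetricSpace L] [MeasurableSpace L] [BorelSpace L]
    (ε : ℝ) (hε : 0 < ε) : ∃ q : L → L, (∀ S : Set L, MeasurableSet (q ⁻¹' S)) ∧
      ∀ x, dist x (q x) < ε := by
  obtain ⟨W, hWo, hWc, hWl, hWs⟩ := precise_refinement (fun a : L => Metric.ball a ε)
    (fun a => Metric.isOpen_ball) (by
      rw [eq_univ_iff_forall]; intro x; exact mem_iUnion.2 ⟨x, Metric.mem_ball_self hε⟩)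
  have hne : ∀ x : L, {a | x ∈ W a}.Nonempty := fun x => by
    have : x ∈ ⋃ i, W i := hWc ▸ mem_univ x
    exact mem_iUnion.1 this
  have wf : WellFounded (WellOrderingRel (α := L)) := IsWellFounded.wf
  let q : L → L := fun x => wf.min {a | x ∈ W a} (hne x)
  have hq : ∀ x, x ∈ W (q x) := fun x => wf.min_mem _ (hne x)
  have hq' : ∀ x b, x ∈ W b → ¬ WellOrderingRel b (q x) := fun x b hb =>
    wf.not_lt_min {a | x ∈ W a} hb
  refine ⟨q, fun S => ?_, fun x => hWs _ (hq x)⟩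
  choose F hFc hFs using fun a => (hWo a).exists_iUnion_isClosed
  have heq : q ⁻¹' S = ⋃ n : ℕ, ⋃ a : L, {x | a ∈ S ∧ x ∈ F a n ∧ ∀ b, WellOrderingRel b a → x ∉ W b} := by
    ext x
    simp only [mem_preimage, mem_iUnion, mem_ofPred_eq]
    constructor
    · intro hx
      have := hq x
      rw [← (hFs (q x)).2.1] at this
      obtain ⟨n, hn⟩ := mem_iUnion.1 this
      exact ⟨n, q x, hx, hn, fun b hb hxb => hq' x b hxb hb⟩
    · rintro ⟨n, a, haS, hxa, hb⟩
      have hxW : x ∈ W a := by rw [← (hFs a).2.1]; exact mem_iUnion.2 ⟨n, hxa⟩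
      rcases trichotomous_of WellOrderingRel a (q x) with h | h | h
      · exact absurd h (hq' x a hxW)
      · exact h ▸ haS
      · exact absurd (hq x) (hb _ h)
  rw [heq]
  refine MeasurableSet.iUnion fun n => IsClosed.measurableSet ?_
  refine LocallyFinite.isClosed_iUnion (hWl.subset fun a x hx => ?_) fun a => ?_
  · rw [← (hFs a).2.1]; exact mem_iUnion.2 ⟨n, hx.2.1⟩
  · by_cases ha : a ∈ S
    · simp only [ha, true_and]
      refine (hFc a n).inter ?_
      have : {x | ∀ b, WellOrderingRel b a → x ∉ W b} = ⋂ b, ⋂ (_ : WellOrderingRel b a), (W b)ᶜ := by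
        ext; simp
      change IsClosed {x | ∀ b, WellOrderingRel b a → x ∉ W b}
      rw [this]
      exact isClosed_iInter fun b => isClosed_iInter fun _ => (hWo b).isClosed_compl
    · simp [ha]

theorem aux_lusin {L K : Type*} [MetricSpace L] [MeasurableSpace L] [BorelSpace L]
    [MetricSpace K] [MeasurableSpace K] [BorelSpace K]
    (μ : Measure K) [IsProbabilityMeasure μ] [μ.Regular] (ψ : K → L) (hψ : Measurable ψ)
    (ε : ℝ) (hε : 0 < ε) (η : ℝ≥0∞) (hη : η ≠ 0) :
    ∃ G : Set K, MeasurableSet G ∧ μ Gᶜ ≤ η ∧ ∃ δ > 0, ∀ x ∈ G, ∀ y ∈ G, dist x y < δ →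
      dist (ψ x) (ψ y) < 2 * ε := by
  obtain ⟨q, hqm, hqd⟩ := aux_partition (L := L) ε hε
  set p : K → L := q ∘ ψ with hpdef
  have hp : ∀ S : Set L, MeasurableSet (p ⁻¹' S) := fun S => hψ (hqm S)
  let I0 : Set L := {i | 0 < μ (p ⁻¹' {i})}
  have hI0 : I0.Countable := Measure.countable_meas_pos_of_disjoint_iUnion
    (fun i => hp {i}) (fun i j hij => Disjoint.preimage p (disjoint_singleton.2 hij))
  have hrest : μ (p ⁻¹' I0ᶜ) = 0 := by
    by_contra hpos
    obtain ⟨C, hCs, hCc, hCm⟩ := (hp I0ᶜ).exists_lt_isCompact_of_ne_top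
      (measure_ne_top μ _) (pos_iff_ne_zero.2 hpos)
    have : CompactSpace C := isCompact_iff_compactSpace.1 hCc
    have hCmeas := hCc.measurableSet
    have hemb : MeasurableEmbedding (Subtype.val : C → K) := MeasurableEmbedding.subtype_coe hCmeas
    let m : Measure C := μ.comap Subtype.val
    have hm : ∀ s : Set C, m s = μ (Subtype.val '' s) := fun s => hemb.comap_apply μ s
    have : IsFiniteMeasure m := ⟨by rw [hm]; exact measure_lt_top _ _⟩
    have h0 := aux_core' m (fun x : C => p x) (fun S => measurable_subtype_coe (hp S)) (by
      intro i
      rw [hm]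
      by_cases hi : i ∈ I0
      · convert measure_empty (μ := μ)
        rw [image_eq_empty, eq_empty_iff_forall_notMem]
        intro x hx
        have hx' : p x = i := hx
        exact hCs x.2 (by rw [hx']; exact hi)
      · have : μ (p ⁻¹' {i}) = 0 := by simpa [I0] using hi
        refine measure_mono_null ?_ this
        rintro _ ⟨x, hx, rfl⟩
        exact hx)
    rw [hm] at h0
    simp at h0
    exact hCm.ne' h0
  have : Countable I0 := hI0
  have hη2 : η / 2 ≠ 0 := (ENNReal.half_pos hη).ne'
  obtain ⟨η', hη', hsum⟩ := ENNReal.exists_pos_sum_of_countable' hη2 I0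
  choose F hFs hFc _ hFm using fun i : I0 =>
    (hp {i.1}).exists_isCompact_isClosed_sdiff_lt (measure_ne_top μ _) (hη' i).ne'
  have hU : μ (⋃ i, F i)ᶜ ≤ η / 2 := by
    calc μ (⋃ i, F i)ᶜ ≤ μ (p ⁻¹' I0ᶜ ∪ ⋃ i : I0, (p ⁻¹' {i.1} \ F i)) := by
          apply measure_mono
          intro x hx
          by_cases hx0 : p x ∈ I0
          · right
            refine mem_iUnion.2 ⟨⟨p x, hx0⟩, rfl, fun h => hx (mem_iUnion.2 ⟨_, h⟩)⟩
          · left; exact hx0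
      _ ≤ μ (p ⁻¹' I0ᶜ) + μ (⋃ i : I0, (p ⁻¹' {i.1} \ F i)) := measure_union_le _ _
      _ ≤ 0 + ∑' i : I0, μ (p ⁻¹' {i.1} \ F i) := by
          rw [hrest]; gcongr; exact measure_iUnion_le _
      _ ≤ ∑' i : I0, η' i := by
          rw [zero_add]; exact ENNReal.tsum_le_tsum fun i => (hFm i).le
      _ ≤ η / 2 := hsum.le
  have hmono : Monotone (fun T : Finset I0 => ⋃ i ∈ T, F i) := fun T T' h =>
    biUnion_subset_biUnion_left h
  have htend := tendsto_measure_iUnion_atTop (μ := μ) hmono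
  have hUU : (⋃ T : Finset I0, ⋃ i ∈ T, F i) = ⋃ i, F i := by
    ext x; simp only [mem_iUnion]; constructor
    · rintro ⟨_, i, _, h⟩; exact ⟨i, h⟩
    · rintro ⟨i, h⟩; exact ⟨{i}, i, by simp, h⟩
  rw [hUU] at htend
  have hFmeas : ∀ i, MeasurableSet (F i) := fun i => (hFc i).measurableSet
  have hT : ∃ T : Finset I0, μ (⋃ i, F i) ≤ μ (⋃ i ∈ T, F i) + η / 2 := by
    rcases eq_or_ne (μ (⋃ i, F i)) 0 with h0 | h0
    · exact ⟨∅, by rw [h0]; exact zero_le⟩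
    have : μ (⋃ i, F i) - η / 2 < μ (⋃ i, F i) := ENNReal.sub_lt_self (measure_ne_top _ _) h0 hη2
    obtain ⟨T, hT⟩ := (htend.eventually (lt_mem_nhds this)).exists
    exact ⟨T, tsub_le_iff_right.1 hT.le⟩
  obtain ⟨T, hT⟩ := hT
  have hGm : MeasurableSet (⋃ i ∈ T, F i) := Finset.measurableSet_biUnion T fun i _ => hFmeas i
  refine ⟨⋃ i ∈ T, F i, hGm, ?_, ?_⟩
  · have hUm : MeasurableSet (⋃ i, F i) := MeasurableSet.iUnion hFmeas
    calc μ (⋃ i ∈ T, F i)ᶜ ≤ μ ((⋃ i, F i)ᶜ ∪ ((⋃ i, F i) \ (⋃ i ∈ T, F i))) := by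
          apply measure_mono
          intro x hx
          by_cases h : x ∈ ⋃ i, F i
          · right; exact ⟨h, hx⟩
          · left; exact h
      _ ≤ μ (⋃ i, F i)ᶜ + μ ((⋃ i, F i) \ (⋃ i ∈ T, F i)) := measure_union_le _ _
      _ ≤ η / 2 + η / 2 := by
          gcongr
          rw [measure_sdiff (iUnion₂_subset fun i _ => subset_iUnion F i) hGm.nullMeasurableSet
            (measure_ne_top _ _)]
          exact tsub_le_iff_left.2 hT
      _ = η := ENNReal.add_halves η
  · have hev : ∀ᶠ δ : ℝ in nhdsWithin 0 (Ioi 0), ∀ i ∈ T, ∀ j ∈ T, ∀ x ∈ F i, ∀ y ∈ F j,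
        dist x y < δ → i = j := by
      rw [Filter.eventually_all_finset]
      intro i _
      rw [Filter.eventually_all_finset]
      intro j _
      by_cases hij : i = j
      · exact Eventually.of_forall fun _ _ _ _ _ _ => hij
      have hd : Disjoint (F i) (F j) := by
        rw [Set.disjoint_left]
        intro x hx hy
        exact hij (Subtype.ext ((hFs i hx : p x = i).symm.trans (hFs j hy)))
      obtain ⟨δ, hδ, hdd⟩ := hd.exists_thickenings (hFc i) (hFc j).isClosed
      filter_upwards [Ioo_mem_nhdsGT hδ] with δ' hδ' x hx y hy hxy
      exfalso
      refine Set.disjoint_left.1 hdd (Metric.self_subset_thickening hδ _ hx) ?_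
      exact Metric.mem_thickening_iff.2 ⟨y, hy, hxy.trans hδ'.2⟩
    obtain ⟨δ, hδ, hδ0⟩ := (hev.and self_mem_nhdsWithin).exists
    refine ⟨δ, hδ0, fun x hx y hy hxy => ?_⟩
    simp only [mem_iUnion] at hx hy
    obtain ⟨i, hiT, hxi⟩ := hx
    obtain ⟨j, hjT, hyj⟩ := hy
    have hij := hδ i hiT j hjT x hxi y hyj hxy
    have h1 : q (ψ x) = i := hFs i hxi
    have h2 : q (ψ y) = i := hij ▸ hFs j hyj
    have h3 := hqd (ψ x)
    have h4 := hqd (ψ y)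
    rw [h1] at h3; rw [h2, dist_comm] at h4
    linarith [dist_triangle (ψ x) i (ψ y)]

/-- Key lemma: if `H_{j,t} → id` uniformly, `h_j → id` uniformly, and the Jacobians of the
`h_j` with respect to the regular probability measure `μ` on the (normal) metric space `K`
are uniformly bounded, then for every bounded measurable `ψ : K → L` into a geodesically
convex metric space `L`, `∫ dist(ψ(t), H_{j,t}(ψ(h_j(t)))) dμ(t) → 0`. -/
theorem stmt_12 {L K : Type*} [MetricSpace L] [MeasurableSpace L] [BorelSpace L]
    [MetricSpace K] [MeasurableSpace K] [BorelSpace K]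
    (μ : Measure K) [IsProbabilityMeasure μ] [μ.Regular]
    (hconv : ∃ τ : ℝ, 1 ≤ τ ∧ ∀ u v : L, ∃ γ : ℝ → L,
      ContinuousOn γ (Icc 0 1) ∧ γ 0 = u ∧ γ 1 = v ∧
      ∀ s ∈ Icc (0:ℝ) 1, ∀ t ∈ Icc (0:ℝ) 1, dist (γ s) (γ t) ≤ τ * dist u v)
    (H : ℕ → K → L → L) (h : ℕ → K → K)
    (hhmeas : ∀ j, Measurable (h j))
    (hHconv : ∀ ε > 0, ∃ J, ∀ j ≥ J, ∀ (t : K) (x : L), dist (H j t x) x < ε)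
    (hhconv : ∀ ε > 0, ∃ J, ∀ j ≥ J, ∀ t : K, dist (h j t) t < ε)
    (hjac : ∃ C : ℝ≥0∞, C ≠ ⊤ ∧ ∀ j, ∀ φ : K → ℝ≥0∞, Measurable φ →
      ∫⁻ t, φ (h j t) ∂μ ≤ C * ∫⁻ t, φ t ∂μ)
    (ψ : K → L) (hψ : Measurable ψ) (hψbdd : Bornology.IsBounded (range ψ)) :
    Tendsto (fun j => ∫⁻ t, ENNReal.ofReal (dist (ψ t) (H j t (ψ (h j t)))) ∂μ)
      atTop (nhds 0) := by
  obtain ⟨C, hC, hjac⟩ := hjac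
  obtain ⟨D, hD⟩ := Metric.isBounded_iff.1 hψbdd
  have hD' : ∀ x y, dist (ψ x) (ψ y) ≤ D := fun x y => hD (mem_range_self x) (mem_range_self y)
  rw [ENNReal.tendsto_nhds_zero]
  intro e he
  -- constants
  obtain ⟨ε, hε, hεe⟩ : ∃ ε : ℝ, 0 < ε ∧ ENNReal.ofReal (3 * ε) ≤ e / 2 := by
    obtain ⟨r, hr0, hr⟩ := ENNReal.lt_iff_exists_nnreal_btwn.1 (ENNReal.half_pos he.ne')
    refine ⟨r / 3, by have : (0:ℝ) < r := by exact_mod_cast hr0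
                      positivity, ?_⟩
    rw [mul_div_cancel₀ _ (by norm_num : (3:ℝ) ≠ 0), ENNReal.ofReal_coe_nnreal]
    exact hr.le
  set M : ℝ≥0∞ := ENNReal.ofReal D * (1 + C) + 1 with hM
  have hMtop : M ≠ ⊤ := by
    simp only [hM]
    exact ENNReal.add_ne_top.2 ⟨ENNReal.mul_ne_top ENNReal.ofReal_ne_top
      (ENNReal.add_ne_top.2 ⟨ENNReal.one_ne_top, hC⟩), ENNReal.one_ne_top⟩
  have hM0 : M ≠ 0 := by simp [hM]
  set η : ℝ≥0∞ := (e / 2) / M with hηdef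
  have hη : η ≠ 0 := (ENNReal.div_pos (ENNReal.half_pos he.ne').ne' hMtop).ne'
  obtain ⟨G, hG, hGη, δ, hδ, hGd⟩ := aux_lusin μ ψ hψ ε hε η hη
  obtain ⟨J1, hJ1⟩ := hHconv ε hε
  obtain ⟨J2, hJ2⟩ := hhconv δ hδ
  filter_upwards [eventually_ge_atTop (max J1 J2)] with j hj
  have hj1 := hJ1 j (le_trans (le_max_left _ _) hj)
  have hj2 := hJ2 j (le_trans (le_max_right _ _) hj)
  let φ : K → ℝ≥0∞ := Gᶜ.indicator (fun _ => 1)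
  have hφ : Measurable φ := measurable_const.indicator hG.compl
  have hφi : ∫⁻ t, φ t ∂μ = μ Gᶜ := lintegral_indicator_one hG.compl
  have hpt : ∀ t, ENNReal.ofReal (dist (ψ t) (H j t (ψ (h j t)))) ≤
      ENNReal.ofReal (3 * ε) + ENNReal.ofReal D * (φ t + φ (h j t)) := by
    intro t
    have h1 : dist (ψ t) (H j t (ψ (h j t))) ≤ dist (ψ t) (ψ (h j t)) + ε := by
      have := hj1 t (ψ (h j t))
      rw [dist_comm] at this
      linarith [dist_triangle (ψ t) (ψ (h j t)) (H j t (ψ (h j t)))]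
    by_cases hgood : t ∈ G ∧ h j t ∈ G
    · have h2 := hGd t hgood.1 (h j t) hgood.2 (by rw [dist_comm]; exact hj2 t)
      exact le_trans (ENNReal.ofReal_le_ofReal (by linarith)) le_self_add
    · have h2 : 1 ≤ φ t + φ (h j t) := by
        by_cases ht : t ∈ G
        · have : φ (h j t) = 1 := indicator_of_mem (show h j t ∈ Gᶜ from fun hh => hgood ⟨ht, hh⟩) _
          rw [this]; exact le_add_self
        · have : φ t = 1 := indicator_of_mem ht _
          rw [this]; exact le_self_add
      have hD0 : 0 ≤ D := dist_nonneg.trans (hD' t t)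
      calc ENNReal.ofReal (dist (ψ t) (H j t (ψ (h j t))))
          ≤ ENNReal.ofReal (3 * ε + D) := ENNReal.ofReal_le_ofReal (by linarith [hD' t (h j t)])
        _ = ENNReal.ofReal (3 * ε) + ENNReal.ofReal D * 1 := by
            rw [ENNReal.ofReal_add (by positivity) hD0, mul_one]
        _ ≤ _ := by gcongr
  calc ∫⁻ t, ENNReal.ofReal (dist (ψ t) (H j t (ψ (h j t)))) ∂μ
      ≤ ∫⁻ t, (ENNReal.ofReal (3 * ε) + ENNReal.ofReal D * (φ t + φ (h j t))) ∂μ :=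
        lintegral_mono hpt
    _ = ENNReal.ofReal (3 * ε) + ENNReal.ofReal D * (∫⁻ t, φ t ∂μ + ∫⁻ t, φ (h j t) ∂μ) := by
        rw [lintegral_add_left measurable_const,
          lintegral_const_mul _ (show Measurable fun t => φ t + φ (h j t) from
            hφ.add (hφ.comp (hhmeas j))), lintegral_add_left hφ]
        simp
    _ ≤ ENNReal.ofReal (3 * ε) + ENNReal.ofReal D * (η + C * η) := by
        have h1 : ∫⁻ t, φ t ∂μ ≤ η := hφi ▸ hGη
        have h2 : ∫⁻ t, φ (h j t) ∂μ ≤ C * η := (hjac j φ hφ).trans (by gcongr)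
        gcongr
    _ ≤ e / 2 + M * η := by
        refine add_le_add hεe ?_
        rw [hM, ← one_add_mul, ← mul_assoc]
        exact mul_le_mul_left le_self_add _
    _ = e / 2 + e / 2 := by rw [hηdef, ENNReal.mul_div_cancel hM0 hMtop]
    _ = e := ENNReal.add_halves e
end

section
/- Let (X, 𝔅, μ) be a complete probability space, Y a separable complete metric space with Borel σ-algebra 𝔅(Y), and κ(Y) the space of nonempty compact subsets of Y with the Hausdorff topology. For a map x ↦ K_x from X to κ(Y), the following are equivalent: (1) x ↦ K_x is measurable; (2) its graph {(x,y) ∈ X × Y : y ∈ K_x} belongs to 𝔅 ⊗ 𝔅(Y); (3) {x ∈ X : K_x ∩ U ≠ ∅} ∈ 𝔅 for every open U ⊂ Y. Moreover, any of these conditions implies the existence of a measurable map s : X → Y with s(x) ∈ K_x for every x ∈ X. -/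
open MeasureTheory TopologicalSpace

/-- Borel σ-algebra on the space of nonempty compact subsets with the Hausdorff metric. -/
noncomputable instance {Y : Type*} [MetricSpace Y] :
    MeasurableSpace (NonemptyCompacts Y) := borel _

open Set Filter Topology

/-- A neighbourhood of a compact box in Baire space contains a finite-coordinate box. -/
lemma baire_box_subset (n : ℕ → ℕ) (V : Set (ℕ → ℕ)) (hV : IsOpen V)
    (hK : {x : ℕ → ℕ | ∀ i, x i ≤ n i} ⊆ V) :
    ∃ k : ℕ, {x : ℕ → ℕ | ∀ i < k, x i ≤ n i} ⊆ V := by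
  by_contra! H
  have H' : ∀ k : ℕ, ∃ x : ℕ → ℕ, (∀ i < k, x i ≤ n i) ∧ x ∉ V := by
    intro k
    obtain ⟨x, hx, hxV⟩ := Set.not_subset.1 (H k)
    exact ⟨x, hx, hxV⟩
  choose x hx hxV using H'
  have hc : IsCompact {x : ℕ → ℕ | ∀ i, x i ≤ n i} := by
    have := isCompact_univ_pi (X := fun _ : ℕ => ℕ) (s := fun i => Set.Iic (n i))
      (fun i => (Set.finite_Iic (n i)).isCompact)
    convert this using 1
    ext y; simp [Pi.le_def]
  let y : ℕ → ℕ → ℕ := fun k i => min (x k i) (n i)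
  obtain ⟨a, ha, φ, hφ, hlim⟩ := hc.tendsto_subseq (x := y)
    (fun k i => min_le_right _ _)
  have hlim2 : Tendsto (x ∘ φ) atTop (𝓝 a) := by
    rw [tendsto_pi_nhds] at hlim ⊢
    intro i
    refine (hlim i).congr' ?_
    filter_upwards [eventually_gt_atTop i] with k hk
    exact min_eq_left (hx (φ k) i (lt_of_lt_of_le hk (hφ.id_le k)))
  obtain ⟨k, hk⟩ := (hlim2.eventually (hV.mem_nhds (hK ha))).exists
  exact hxV _ hk

lemma analytic_inner_approx {Z : Type*} [TopologicalSpace Z] [MeasurableSpace Z]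
    (ν : Measure Z) [ν.OuterRegular] (g : (ℕ → ℕ) → Z) (hg : Continuous g)
    (r : ENNReal) (hr : r < ν (range g)) :
    ∃ L : Set Z, IsCompact L ∧ L ⊆ range g ∧ r ≤ ν L := by
  have step : ∀ (k : ℕ) (S : {S : Set (ℕ → ℕ) // r < ν (g '' S)}),
      ∃ m : ℕ, r < ν (g '' (S.1 ∩ {x | x k ≤ m})) := by
    rintro k ⟨S, hS⟩
    have h1 : g '' S = ⋃ m : ℕ, g '' (S ∩ {x | x k ≤ m}) := by
      rw [← image_iUnion, ← inter_iUnion]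
      congr 1
      ext x
      simp only [mem_inter_iff, mem_iUnion, mem_ofPred_eq]
      exact ⟨fun h => ⟨h, x k, le_rfl⟩, fun h => h.1⟩
    have hm : Monotone fun m : ℕ => g '' (S ∩ {x | x k ≤ m}) := by
      intro a b hab
      apply image_mono
      rintro x ⟨h1, h2⟩
      exact ⟨h1, le_trans h2 hab⟩
    rw [h1, hm.measure_iUnion] at hS
    exact lt_iSup_iff.1 hS
  choose m hm using step
  let T : ℕ → {S : Set (ℕ → ℕ) // r < ν (g '' S)} := fun k =>
    Nat.rec ⟨univ, by rwa [image_univ]⟩ (fun k S => ⟨S.1 ∩ {x | x k ≤ m k S}, hm k S⟩) k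
  let n : ℕ → ℕ := fun k => m k (T k)
  have hT : ∀ k, (T k).1 = {x : ℕ → ℕ | ∀ i < k, x i ≤ n i} := by
    intro k
    induction k with
    | zero => ext x; simp [T]
    | succ k ih =>
      have : (T (k+1)).1 = (T k).1 ∩ {x | x k ≤ n k} := rfl
      rw [this, ih]
      ext x
      simp only [mem_inter_iff, mem_ofPred_eq, Nat.lt_succ_iff_lt_or_eq]
      constructor
      · rintro ⟨h1, h2⟩ i (hi | rfl)
        · exact h1 i hi
        · exact h2
      · intro h
        exact ⟨fun i hi => h i (Or.inl hi), h k (Or.inr rfl)⟩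
  have hc : IsCompact {x : ℕ → ℕ | ∀ i, x i ≤ n i} := by
    have := isCompact_univ_pi (X := fun _ : ℕ => ℕ) (s := fun i => Set.Iic (n i))
      (fun i => (Set.finite_Iic (n i)).isCompact)
    convert this using 1
    ext y; simp [Pi.le_def]
  refine ⟨_, hc.image hg, image_subset_range _ _, ?_⟩
  by_contra! hlt
  obtain ⟨U, hU, hUo, hUr⟩ := Set.exists_isOpen_lt_of_lt _ r hlt
  obtain ⟨k, hk⟩ := baire_box_subset n (g ⁻¹' U) (hUo.preimage hg) (image_subset_iff.1 hU)
  have h1 : r < ν (g '' (T k).1) := (T k).2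
  rw [hT k] at h1
  have h2 := measure_mono (μ := ν) (image_subset_iff.2 hk)
  exact absurd (h1.trans_le (h2.trans hUr.le)) (lt_irrefl _)

lemma analytic_nullMeasurable {Z : Type*} [TopologicalSpace Z] [T2Space Z] [MeasurableSpace Z]
    [BorelSpace Z] (ν : Measure Z) [IsFiniteMeasure ν] [ν.OuterRegular] (A : Set Z)
    (hA : AnalyticSet A) : NullMeasurableSet A ν := by
  rw [AnalyticSet] at hA
  rcases hA with rfl | ⟨g, hg, rfl⟩
  · exact MeasurableSet.empty.nullMeasurableSet
  rcases eq_or_ne (ν (range g)) 0 with h0 | h0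
  · exact NullMeasurableSet.of_null h0
  obtain ⟨r, -, hr, hrlim⟩ := exists_seq_strictMono_tendsto' (pos_iff_ne_zero.2 h0)
  choose L hLc hLs hLr using fun j => analytic_inner_approx ν g hg (r j) (hr j).2
  have hms : MeasurableSet (⋃ j, L j) := MeasurableSet.iUnion fun j => (hLc j).measurableSet
  have hsub : (⋃ j, L j) ⊆ range g := iUnion_subset hLs
  have hle : ν (range g) ≤ ν (⋃ j, L j) :=
    le_of_tendsto' hrlim fun j => (hLr j).trans (measure_mono (subset_iUnion L j))
  have := ae_eq_of_subset_of_measure_ge hsub hle hms.nullMeasurableSet (measure_ne_top _ _)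
  exact hms.nullMeasurableSet.congr this

/-- A set measurable in a product comes from a product with the Cantor space. -/
lemma prod_reduction {X Y : Type*} [MeasurableSpace X] [MeasurableSpace Y] (S : Set (X × Y))
    (hS : MeasurableSet S) :
    ∃ (f : X → ℕ → Bool) (S' : Set ((ℕ → Bool) × Y)), Measurable f ∧ MeasurableSet S' ∧
      S = (fun p : X × Y => (f p.1, p.2)) ⁻¹' S' := by
  classical
  rw [← generateFrom_prod] at hS
  refine MeasurableSpace.generateFrom_induction _ (fun S _ =>
    ∃ (f : X → ℕ → Bool) (S' : Set ((ℕ → Bool) × Y)), Measurable f ∧ MeasurableSet S' ∧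
      S = (fun p : X × Y => (f p.1, p.2)) ⁻¹' S') ?_ ?_ ?_ ?_ S hS
  · rintro _ ⟨A, hA, B, hB, rfl⟩ -
    refine ⟨fun x _ => decide (x ∈ A), {z | z 0 = true} ×ˢ B, ?_, ?_, ?_⟩
    · refine measurable_pi_lambda _ fun _ => ?_
      refine measurable_to_bool ?_
      have hA' : MeasurableSet A := hA
      convert hA' using 1
      ext x; simp
    · refine MeasurableSet.prod ?_ hB
      exact (measurable_pi_apply (X := fun _ : ℕ => Bool) 0) (measurableSet_singleton true)
    · ext ⟨x, y⟩; simp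
  · exact ⟨fun _ _ => true, ∅, measurable_const, MeasurableSet.empty, by simp⟩
  · rintro t - ⟨f, S', hf, hS', rfl⟩
    exact ⟨f, S'ᶜ, hf, hS'.compl, rfl⟩
  · intro s _ h
    choose f S' hf hS' hs using h
    refine ⟨fun x k => f k.unpair.1 x k.unpair.2,
      ⋃ n, (fun p : (ℕ → Bool) × Y => ((fun m => p.1 (Nat.pair n m) : ℕ → Bool), p.2)) ⁻¹' S' n,
      ?_, ?_, ?_⟩
    · exact measurable_pi_lambda _ fun k => (measurable_pi_apply _).comp (hf _)
    · refine MeasurableSet.iUnion fun n => ?_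
      refine Measurable.comp (g := id) measurable_id ?_ (hS' n)
      refine Measurable.prodMk (measurable_pi_lambda _ fun m => ?_) measurable_snd
      exact (measurable_pi_apply _).comp measurable_fst
    · rw [preimage_iUnion]
      refine iUnion_congr fun n => ?_
      rw [hs n]
      ext ⟨x, y⟩
      simp

lemma measurable_projection {X Y : Type*} [MeasurableSpace X]
    (μ : Measure X) [IsFiniteMeasure μ] [μ.IsComplete]
    [TopologicalSpace Y] [PolishSpace Y] [MeasurableSpace Y] [BorelSpace Y]
    (S : Set (X × Y)) (hS : MeasurableSet S) : MeasurableSet (Prod.fst '' S) := by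
  obtain ⟨f, S', hf, hS', rfl⟩ := prod_reduction S hS
  have hA : AnalyticSet (Prod.fst '' S') := hS'.analyticSet_image measurable_fst
  have hnull := analytic_nullMeasurable (μ.map f) _ hA
  have h2 : NullMeasurableSet (f ⁻¹' (Prod.fst '' S')) μ :=
    hnull.preimage ⟨hf, Measure.AbsolutelyContinuous.rfl⟩
  convert h2.measurable_of_complete using 1
  ext x
  simp

/-- Hitting closed sets from hitting open sets, for compact values. -/
lemma hits_closed_of_hits_open {X Y : Type*} [MeasurableSpace X] [MetricSpace Y]
    (K : X → Set Y) (hK : ∀ x, IsCompact (K x))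
    (h : ∀ U : Set Y, IsOpen U → MeasurableSet {x : X | (K x ∩ U).Nonempty})
    (F : Set Y) (hF : IsClosed F) : MeasurableSet {x : X | (K x ∩ F).Nonempty} := by
  have : {x : X | (K x ∩ F).Nonempty} =
      ⋂ n : ℕ, {x : X | (K x ∩ Metric.thickening (1 / ((n : ℝ) + 1)) F).Nonempty} := by
    ext x
    simp only [mem_iInter, mem_ofPred_eq]
    constructor
    · rintro ⟨y, hy, hyF⟩ n
      exact ⟨y, hy, Metric.self_subset_thickening (by positivity) _ hyF⟩
    · intro hx
      by_contra hne
      have hd : Disjoint (K x) F := by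
        rw [Set.disjoint_iff_inter_eq_empty]
        exact Set.not_nonempty_iff_eq_empty.1 hne
      obtain ⟨δ, hδ, hdis⟩ := hd.exists_thickenings (hK x) hF
      obtain ⟨n, hn⟩ := exists_nat_one_div_lt hδ
      obtain ⟨y, hy, hyt⟩ := hx n
      exact Set.disjoint_left.1 hdis (Metric.self_subset_thickening hδ _ hy)
        (Metric.thickening_mono hn.le _ hyt)
  rw [this]
  exact MeasurableSet.iInter fun n => h _ Metric.isOpen_thickening

lemma selection_step {X Y : Type*} [MeasurableSpace X] [MetricSpace Y] [SeparableSpace Y]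
    [Nonempty Y] (ε : ℝ) (hε : 0 < ε)
    (K : X → Set Y) (hK : ∀ x, IsCompact (K x)) (hne : ∀ x, (K x).Nonempty)
    (h : ∀ F : Set Y, IsClosed F → MeasurableSet {x : X | (K x ∩ F).Nonempty}) :
    ∃ K' : X → Set Y, (∀ x, IsCompact (K' x)) ∧ (∀ x, (K' x).Nonempty) ∧
      (∀ F : Set Y, IsClosed F → MeasurableSet {x : X | (K' x ∩ F).Nonempty}) ∧
      (∀ x, K' x ⊆ K x) ∧ ∀ x, ∀ y ∈ K' x, ∀ z ∈ K' x, dist y z ≤ ε + ε := by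
  classical
  let q := denseSeq Y
  have hex : ∀ x, ∃ j, (K x ∩ Metric.closedBall (q j) ε).Nonempty := by
    intro x
    obtain ⟨y, hy⟩ := hne x
    obtain ⟨j, hj⟩ := (denseRange_denseSeq Y).exists_dist_lt y hε
    exact ⟨j, y, hy, Metric.mem_closedBall.2 hj.le⟩
  let J : X → ℕ := fun x => Nat.find (hex x)
  have hJ : Measurable J := measurable_find hex fun j => h _ Metric.isClosed_closedBall
  refine ⟨fun x => K x ∩ Metric.closedBall (q (J x)) ε,
    fun x => (hK x).inter_right Metric.isClosed_closedBall,
    fun x => Nat.find_spec (hex x), ?_, fun x => inter_subset_left, ?_⟩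
  · intro F hF
    have : {x : X | (K x ∩ Metric.closedBall (q (J x)) ε ∩ F).Nonempty} =
        ⋃ j : ℕ, (J ⁻¹' {j}) ∩ {x : X | (K x ∩ (Metric.closedBall (q j) ε ∩ F)).Nonempty} := by
      ext x
      simp [inter_assoc]
    rw [this]
    exact MeasurableSet.iUnion fun j => (hJ (measurableSet_singleton j)).inter
      (h _ (Metric.isClosed_closedBall.inter hF))
  · rintro x y ⟨-, hy⟩ z ⟨-, hz⟩
    exact (dist_triangle_right y z (q (J x))).trans (add_le_add hy hz)

lemma exists_selection {X Y : Type*} [MeasurableSpace X] [MetricSpace Y] [SeparableSpace Y]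
    [MeasurableSpace Y] [BorelSpace Y]
    (K : X → Set Y) (hK : ∀ x, IsCompact (K x)) (hne : ∀ x, (K x).Nonempty)
    (h : ∀ F : Set Y, IsClosed F → MeasurableSet {x : X | (K x ∩ F).Nonempty}) :
    ∃ s : X → Y, Measurable s ∧ ∀ x, s x ∈ K x := by
  rcases isEmpty_or_nonempty X with hX | ⟨⟨x0⟩⟩
  · exact ⟨fun x => hX.elim x, measurable_of_empty _, fun x => hX.elim x⟩
  haveI : Nonempty Y := ⟨(hne x0).some⟩
  let P : (X → Set Y) → Prop := fun K => (∀ x, IsCompact (K x)) ∧ (∀ x, (K x).Nonempty) ∧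
      (∀ F : Set Y, IsClosed F → MeasurableSet {x : X | (K x ∩ F).Nonempty})
  have step : ∀ (n : ℕ) (K : {K : X → Set Y // P K}), ∃ K' : {K : X → Set Y // P K},
      (∀ x, K'.1 x ⊆ K.1 x) ∧ ∀ x, ∀ y ∈ K'.1 x, ∀ z ∈ K'.1 x,
        dist y z ≤ 1 / ((n : ℝ) + 1) + 1 / ((n : ℝ) + 1) := by
    rintro n ⟨K, h1, h2, h3⟩
    obtain ⟨K', a, b, c, d, e⟩ := selection_step (1 / ((n : ℝ) + 1)) (by positivity) K h1 h2 h3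
    exact ⟨⟨K', a, b, c⟩, d, e⟩
  choose N hsub hdist using step
  let T : ℕ → {K : X → Set Y // P K} := fun k => Nat.rec ⟨K, hK, hne, h⟩ (fun n S => N n S) k
  have hTs : ∀ n x, (T (n + 1)).1 x ⊆ (T n).1 x := fun n x => hsub n (T n) x
  have hTd : ∀ n x, ∀ y ∈ (T (n + 1)).1 x, ∀ z ∈ (T (n + 1)).1 x,
        dist y z ≤ 1 / ((n : ℝ) + 1) + 1 / ((n : ℝ) + 1) := fun n x => hdist n (T n) x
  have hinter : ∀ (F : Set Y), IsClosed F → ∀ x, (∀ n, ((T n).1 x ∩ F).Nonempty) →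
      (⋂ n, ((T n).1 x ∩ F)).Nonempty := by
    intro F hF x hx
    refine IsCompact.nonempty_iInter_of_sequence_nonempty_isCompact_isClosed _ ?_ hx
      (((T 0).2.1 x).inter_right hF) (fun n => ((T n).2.1 x).isClosed.inter hF)
    intro n
    exact inter_subset_inter_left _ (hTs n x)
  have hpt : ∀ x, ∃ y, ∀ n, y ∈ (T n).1 x := by
    intro x
    obtain ⟨y, hy⟩ := hinter univ isClosed_univ x (fun n => by simpa using (T n).2.2.1 x)
    exact ⟨y, fun n => (mem_iInter.1 hy n).1⟩
  choose s hs using hpt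
  have huniq : ∀ x y, (∀ n, y ∈ (T n).1 x) → y = s x := by
    intro x y hy
    have hlim : Tendsto (fun n : ℕ => 1 / ((n : ℝ) + 1) + 1 / ((n : ℝ) + 1)) atTop (𝓝 (0 + 0)) :=
      tendsto_one_div_add_atTop_nhds_zero_nat.add tendsto_one_div_add_atTop_nhds_zero_nat
    rw [add_zero] at hlim
    have : dist y (s x) ≤ 0 := ge_of_tendsto' hlim fun n =>
      hTd n x y (hy (n + 1)) (s x) (hs x (n + 1))
    exact dist_le_zero.1 this
  refine ⟨s, measurable_of_isClosed fun F hF => ?_, fun x => hs x 0⟩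
  have : s ⁻¹' F = ⋂ n, {x : X | ((T n).1 x ∩ F).Nonempty} := by
    ext x
    simp only [mem_preimage, mem_iInter, mem_ofPred_eq]
    constructor
    · intro hx n
      exact ⟨s x, hs x n, hx⟩
    · intro hx
      obtain ⟨y, hy⟩ := hinter F hF x hx
      rw [mem_iInter] at hy
      rw [← huniq x y fun n => (hy n).1]
      exact (hy 0).2
  rw [this]
  exact MeasurableSet.iInter fun n => (T n).2.2.2 F hF

lemma measurable_of_hits {X Y : Type*} [MeasurableSpace X] [MetricSpace Y] [SeparableSpace Y]
    (K : X → NonemptyCompacts Y)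
    (h : ∀ U : Set Y, IsOpen U → MeasurableSet {x : X | ((K x : Set Y) ∩ U).Nonempty}) :
    Measurable K := by
  haveI : SecondCountableTopology Y := UniformSpace.secondCountable_of_separable Y
  have htop := induced_generateFrom_eq (f := ((↑) : NonemptyCompacts Y → Set Y))
    (b := powerset '' {U | IsOpen U} ∪ (fun V => {s | (s ∩ V).Nonempty}) '' {V | IsOpen V})
  have hb := borel_eq_generateFrom_of_subbasis (α := NonemptyCompacts Y) htop
  intro S hS
  have hS' : MeasurableSet[borel (NonemptyCompacts Y)] S := hS
  rw [hb] at hS'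
  refine (measurable_generateFrom (f := K) ?_) hS'
  rintro _ ⟨_, (⟨U, hU, rfl⟩ | ⟨U, hU, rfl⟩), rfl⟩
  · have h1 := hits_closed_of_hits_open (fun x => (K x : Set Y)) (fun x => (K x).isCompact) h Uᶜ
      (IsOpen.isClosed_compl hU)
    convert h1.compl using 1
    ext x
    simp only [mem_preimage, mem_powerset_iff, mem_compl_iff, mem_ofPred_eq]
    rw [Set.inter_compl_nonempty_iff, not_not]
  · exact h U hU

/-- The Castaing–Valadier measurable selection theorem: for a complete probability space
`(X, 𝔅, μ)` and a separable complete metric space `Y`, and a compact-set-valued map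
`x ↦ K_x`, measurability of the map, measurability of its graph, and measurability of all
sets `{x : K_x ∩ U ≠ ∅}` for `U` open are equivalent; and any of them yields a measurable
selection `s` with `s(x) ∈ K_x` for every `x`. -/
theorem stmt_19 {X Y : Type*} [MeasurableSpace X]
    (μ : Measure X) [IsProbabilityMeasure μ] [μ.IsComplete]
    [MetricSpace Y] [SeparableSpace Y] [CompleteSpace Y]
    [MeasurableSpace Y] [BorelSpace Y]
    (Kmap : X → NonemptyCompacts Y) :
    (Measurable Kmap ↔ MeasurableSet {p : X × Y | p.2 ∈ (Kmap p.1 : Set Y)}) ∧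
    (Measurable Kmap ↔ ∀ U : Set Y, IsOpen U →
      MeasurableSet {x : X | ((Kmap x : Set Y) ∩ U).Nonempty}) ∧
    (Measurable Kmap →
      ∃ s : X → Y, Measurable s ∧ ∀ x, s x ∈ (Kmap x : Set Y)) := by
  haveI : SecondCountableTopology Y := UniformSpace.secondCountable_of_separable Y
  have h13 : Measurable Kmap → ∀ U : Set Y, IsOpen U →
      MeasurableSet {x : X | ((Kmap x : Set Y) ∩ U).Nonempty} := by
    intro hm U hU
    have : MeasurableSet[borel (NonemptyCompacts Y)]
        {K : NonemptyCompacts Y | ((K : Set Y) ∩ U).Nonempty} :=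
      MeasurableSpace.measurableSet_generateFrom (NonemptyCompacts.isOpen_inter_nonempty_of_isOpen hU)
    exact hm this
  refine ⟨⟨fun hm => ?_, fun hG => ?_⟩, ⟨h13, measurable_of_hits Kmap⟩, fun hm => ?_⟩
  · have h3 := h13 hm
    rw [← MeasurableSet.compl_iff]
    have : {p : X × Y | p.2 ∈ (Kmap p.1 : Set Y)}ᶜ =
        ⋃ U ∈ countableBasis Y, {x : X | ((Kmap x : Set Y) ∩ U).Nonempty}ᶜ ×ˢ U := by
      ext ⟨x, y⟩
      simp only [mem_compl_iff, mem_ofPred_eq, mem_iUnion, mem_prod, exists_prop]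
      constructor
      · intro hy
        obtain ⟨U, hU, hyU, hsub⟩ := (isBasis_countableBasis Y).exists_subset_of_mem_open
          (show y ∈ (Kmap x : Set Y)ᶜ from hy) (Kmap x).isCompact.isClosed.isOpen_compl
        refine ⟨U, hU, ?_, hyU⟩
        rintro ⟨z, hz, hzU⟩
        exact hsub hzU hz
      · rintro ⟨U, hU, hne, hyU⟩ hy
        exact hne ⟨y, hy, hyU⟩
    rw [this]
    exact MeasurableSet.biUnion (countable_countableBasis Y) fun U hU =>
      (h3 U (isOpen_of_mem_countableBasis hU)).compl.prod
        (isOpen_of_mem_countableBasis hU).measurableSet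
  · refine measurable_of_hits Kmap fun U hU => ?_
    have := measurable_projection μ _ (hG.inter (measurable_snd hU.measurableSet))
    convert this using 1
    ext x
    simp [Set.Nonempty]
  · exact exists_selection (fun x => (Kmap x : Set Y)) (fun x => (Kmap x).isCompact)
      (fun x => (Kmap x).nonempty)
      (hits_closed_of_hits_open _ (fun x => (Kmap x).isCompact) (h13 hm))
end
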